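/- Let T be a self-adjoint operator in a complex Hilbert space H whose essential spectrum is contained in pairwise disjoint intervals Δ_k = [α_{2k−1}, α_{2k}], k ∈ ℤ, whose gaps Λ_k = (α_{2k}, α_{2k+1}) satisfy α_{2k+1} − α_{2k} ≥ 2^{1−p}·b₁·|α_{2k+1} + α_{2k}|^p for some b₁ > 0 and p ∈ [0,1); outside the intervals Δ_k the operator T has only discrete spectrum, and each gap Λ_k contains at most m eigenvalues of T counted with multiplicity, where m ∈ ℕ does not depend on k. Let B be p-subordinate to T with subordination bound b' < b₁, and set A = T + B on D(T). Then: (i) for every h > b' the spectrum of A outside a sufficiently large disk is contained in the double parabola P_{p,h}; (ii) for every δ ∈ (0, b₁ − b') there exist N ∈ ℕ and a constant C independent of k such that for every |k| ≥ N the vertical strip Ω_k = {λ ∈ ℂ : |Re λ − r_k| ≤ δ|r_k|^p}, where r_k = (α_{2k} + α_{2k+1})/2, contains no points of the spectrum of A other than eigenvalues of total algebraic multiplicity at most C·m. -/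

import Mathlib

noncomputable section

variable {H : Type*} [NormedAddCommGroup H] [InnerProductSpace ℂ H] [CompleteSpace H]

/-- `R` is a two-sided bounded inverse of `T - z` (so `z` is in the resolvent set of `T`). -/
def IsResolventOf (T : H →ₗ.[ℂ] H) (z : ℂ) (R : H →L[ℂ] H) : Prop :=
  (∀ x : T.domain, R (T x - z • (x : H)) = (x : H)) ∧
  (∀ y : H, ∃ hy : R y ∈ T.domain, T ⟨R y, hy⟩ - z • (R y) = y)

/-- The resolvent set of the (in general unbounded) operator `T`. -/
def pmResolventSet (T : H →ₗ.[ℂ] H) : Set ℂ := {z | ∃ R, IsResolventOf T z R}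

/-- The spectrum of the (in general unbounded) operator `T`. -/
def pmSpectrum (T : H →ₗ.[ℂ] H) : Set ℂ := (pmResolventSet T)ᶜ

/-- The set of constants `b` for which `B` is `p`-subordinate to `T` with some admissible
constant `M ≥ 0` (with `M = 0` required when `p = 0`); the subordination bound `b'` is the
infimum of this set. -/
def SubordSet (T B : H →ₗ.[ℂ] H) (hle : T.domain ≤ B.domain) (p : ℝ) : Set ℝ :=
  {b | 0 < b ∧ ∃ M : ℝ, 0 ≤ M ∧ (p = 0 → M = 0) ∧
    ∀ x : T.domain, ‖B ⟨(x : H), hle x.2⟩‖ ≤ b * ‖T x‖ ^ p * ‖(x : H)‖ ^ (1 - p) + M * ‖(x : H)‖}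

/-- The operator sum `A = T + B` defined on the domain of `T`. -/
def pmSum (T B : H →ₗ.[ℂ] H) (hle : T.domain ≤ B.domain) : H →ₗ.[ℂ] H :=
  ⟨T.domain, T.toFun + B.toFun.comp (Submodule.inclusion hle)⟩

/-- The eigenspace of the unbounded operator `T` for the eigenvalue `z`. -/
def pmEigenspace (T : H →ₗ.[ℂ] H) (z : ℂ) : Submodule ℂ H :=
  (LinearMap.ker (T.toFun - z • T.domain.subtype)).map T.domain.subtype

/-- The generalized eigenvectors of order `≤ n` of `A` at `z`. -/
def pmGenEig (A : H →ₗ.[ℂ] H) (z : ℂ) : ℕ → Set H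
  | 0 => {0}
  | n + 1 => {x | ∃ hx : x ∈ A.domain, A ⟨x, hx⟩ - z • x ∈ pmGenEig A z n}

/-
For nonreal `z`, or for `z` in a vertical strip around the centre of a gap that is free of spectrum
of `T`, the norm `‖(T - z) x‖` dominates a multiple of `‖x‖`, and `p`-subordination turns this into
`‖B x‖ ≤ q ‖(T - z) x‖` with `q < 1`, provided `z` is large. A Neumann series then gives (i).

For (ii), adding to `T` a suitable multiple `K` of the orthogonal projection onto the span of the
eigenvectors with eigenvalue in the gap removes these eigenvalues, so the strip lies in the
resolvent set of `K + A`, with a uniform bound for the resolvent. Hence the spectrum of `A` in the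
strip consists of the zeros of the perturbation determinant of the finite-rank operator `-K` with
respect to `K + A`, a determinant of size at most `m`. It is analytic and uniformly bounded on a
slightly wider strip, and it is bounded below at a point far from the real axis. A Blaschke-type
estimate bounds the number of its zeros, and the order of each zero controls the dimension of the
generalized eigenspace.
-/

section Resolvent

variable {E : Type*} [NormedAddCommGroup E] [InnerProductSpace ℂ E]
variable {D : Submodule ℂ E} {L L' : D →ₗ[ℂ] E} {T : E →ₗ.[ℂ] E} {z w : ℂ} {R R' : E →L[ℂ] E}

theorem IsResolventOf.sub_eq (hR : IsResolventOf T z R) (hR' : IsResolventOf T w R') :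
    R' - R = (w - z) • (R' * R) := by
  ext y
  obtain ⟨hy, hTy⟩ := hR.2 y
  have hTw : T ⟨R y, hy⟩ - w • R y = y - (w - z) • R y := by
    rw [sub_eq_iff_eq_add.mp hTy]; module
  have h : R' (T ⟨R y, hy⟩ - w • R y) = R y := hR'.1 ⟨R y, hy⟩
  rw [hTw, map_sub, map_smul, sub_eq_iff_eq_add] at h
  simp only [sub_apply, smul_apply, mul_apply_eq_comp, h]
  abel

theorem IsResolventOf.norm_le_inv {c : ℝ} (hR : IsResolventOf T z R) (hc : 0 < c)
    (hT : ∀ x : T.domain, c * ‖(x : E)‖ ≤ ‖T x - z • (x : E)‖) : ‖R‖ ≤ c⁻¹ := by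
  refine R.opNorm_le_bound (inv_nonneg.mpr hc.le) fun y => ?_
  obtain ⟨hy, hTy⟩ := hR.2 y
  rw [le_inv_mul_iff₀ hc]
  simpa only [hTy] using hT ⟨R y, hy⟩

theorem IsResolventOf.mul_inv (hR : IsResolventOf ⟨D, L⟩ z R) (U : (E →L[ℂ] E)ˣ)
    (hU : ∀ x : D, L' x - w • (x : E) = (U : E →L[ℂ] E) (L x - z • (x : E))) :
    IsResolventOf ⟨D, L'⟩ w (R * ↑U⁻¹) := by
  have hUU (y : E) : (↑U⁻¹ : E →L[ℂ] E) ((U : E →L[ℂ] E) y) = y := by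
    rw [← mul_apply_eq_comp, U.inv_mul, one_apply_eq_self]
  have hUU' (y : E) : (U : E →L[ℂ] E) ((↑U⁻¹ : E →L[ℂ] E) y) = y := by
    rw [← mul_apply_eq_comp, U.mul_inv, one_apply_eq_self]
  refine ⟨fun x => ?_, fun y => ?_⟩
  · change R ((↑U⁻¹ : E →L[ℂ] E) (L' x - w • (x : E))) = x
    rw [hU, hUU]
    exact hR.1 x
  · obtain ⟨hy, hTy⟩ := hR.2 ((↑U⁻¹ : E →L[ℂ] E) y)
    exact ⟨hy, (hU ⟨_, hy⟩).trans ((congrArg _ hTy).trans (hUU' y))⟩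

theorem mem_pmResolventSet_of_isUnit_one_add (hz : z ∈ pmResolventSet ⟨D, L⟩) {K : E →L[ℂ] E}
    (hK : IsUnit (1 + K))
    (hL' : ∀ x : D, L' x - w • (x : E) = L x - z • (x : E) + K (L x - z • (x : E))) :
    w ∈ pmResolventSet ⟨D, L'⟩ := by
  obtain ⟨R, hR⟩ := hz
  obtain ⟨U, hU⟩ := hK
  exact ⟨_, hR.mul_inv U fun x => by rw [hU, hL']; rfl⟩

variable [CompleteSpace E]

theorem mem_pmResolventSet_of_norm_sub_le (hz : z ∈ pmResolventSet ⟨D, L⟩) {q : ℝ} (hq : q < 1)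
    (h : ∀ x : D, ‖(L' x - w • (x : E)) - (L x - z • (x : E))‖ ≤ q * ‖L x - z • (x : E)‖) :
    w ∈ pmResolventSet ⟨D, L'⟩ := by
  obtain ⟨R, hR⟩ := id hz
  set ι : E →ₗ[ℂ] D := (R : E →ₗ[ℂ] E).codRestrict D fun y => (hR.2 y).1
  set V : E →ₗ[ℂ] E := (L' - w • D.subtype - (L - z • D.subtype)) ∘ₗ ι with hV
  have hVR (x : D) : V (L x - z • (x : E)) = (L' x - w • (x : E)) - (L x - z • (x : E)) := by
    have : ι (L x - z • (x : E)) = x := Subtype.ext (hR.1 x)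
    simp [hV, this]
  have hVq (y : E) : ‖V y‖ ≤ q * ‖y‖ := by
    obtain ⟨hy, hTy⟩ := hR.2 y
    have : L ⟨R y, hy⟩ - z • R y = y := hTy
    rw [← this]
    exact (congrArg _ (hVR ⟨R y, hy⟩)).trans_le (h _)
  have hVle : ‖V.mkContinuous q hVq‖ < 1 :=
    (LinearMap.mkContinuous_norm_le' V hVq).trans_lt (max_lt hq one_pos)
  have hunit : IsUnit (1 + V.mkContinuous q hVq) := by
    simpa using isUnit_one_sub_of_norm_lt_one (x := -V.mkContinuous q hVq) (by rwa [norm_neg])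
  refine mem_pmResolventSet_of_isUnit_one_add hz hunit fun x => ?_
  rw [LinearMap.mkContinuous_apply, hVR, add_sub_cancel]

theorem mem_pmResolventSet_vadd_or_exists_eigenvector (hz : z ∈ pmResolventSet T)
    {K : E →L[ℂ] E} (hK : IsCompactOperator K) :
    z ∈ pmResolventSet ((K : E →ₗ[ℂ] E) +ᵥ T) ∨
      ∃ x : T.domain, (x : E) ≠ 0 ∧ K x + T x = z • (x : E) := by
  obtain ⟨R, hR⟩ := id hz
  have hKR : IsCompactOperator (K ∘L R) := hK.comp_clm R
  rcases hKR.hasEigenvalue_or_mem_resolventSet (neg_ne_zero.mpr one_ne_zero) with h | h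
  · right
    obtain ⟨y, hy⟩ := h.exists_hasEigenvector
    obtain ⟨hD, hTy⟩ := hR.2 y
    have hKy : K (R y) = -y := by simpa using hy.apply_eq_smul
    refine ⟨⟨R y, hD⟩, fun h => hy.2 ?_, ?_⟩
    · rw [← neg_eq_zero, ← hKy, show R y = 0 from h, map_zero]
    · rw [hKy, neg_add_eq_iff_eq_add, ← sub_eq_iff_eq_add, hTy]
  · left
    have hunit : IsUnit (1 + K ∘L R) := by
      have := spectrum.mem_resolventSet_iff.mp h
      rw [← IsUnit.neg_iff]
      convert this using 1
      simp [sub_eq_add_neg, add_comm]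
    refine mem_pmResolventSet_of_isUnit_one_add (L := T.toFun) hz hunit fun x => ?_
    have hRx : R (T.toFun x - z • (x : E)) = x := hR.1 x
    simp only [LinearMap.add_apply, LinearMap.comp_apply, Submodule.subtype_apply,
      ContinuousLinearMap.coe_coe, ContinuousLinearMap.comp_apply, hRx]
    abel

theorem subset_pmResolventSet_of_isPreconnected {s : Set ℂ} (hs : IsPreconnected s) {c : ℝ}
    (hc : 0 < c) (hL : ∀ z ∈ s, ∀ x : D, c * ‖(x : E)‖ ≤ ‖L x - z • (x : E)‖) (hzs : z ∈ s)
    (hz : z ∈ pmResolventSet ⟨D, L⟩) : s ⊆ pmResolventSet ⟨D, L⟩ := by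
  have hlocal : ∀ u ∈ s, ∀ v, dist v u < c / 2 → u ∈ pmResolventSet ⟨D, L⟩ →
      v ∈ pmResolventSet ⟨D, L⟩ := by
    intro u hus v hv hu
    refine mem_pmResolventSet_of_norm_sub_le hu one_half_lt_one fun x => ?_
    have : ‖L x - v • (x : E) - (L x - u • (x : E))‖ = dist v u * ‖(x : E)‖ := by
      rw [dist_comm, dist_eq_norm, ← norm_smul]; congr 1; module
    rw [this]
    nlinarith [hL u hus x, norm_nonneg (x : E)]
  intro w hws
  refine (hs.induction₂ (fun u v => u ∈ pmResolventSet ⟨D, L⟩ ↔ v ∈ pmResolventSet ⟨D, L⟩)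
    (fun u hu => ?_) (fun _ _ _ _ _ _ h₁ h₂ => h₁.trans h₂) (fun _ _ _ _ h => h.symm) hzs hws).mp hz
  filter_upwards [self_mem_nhdsWithin, mem_nhdsWithin_of_mem_nhds
    (Metric.ball_mem_nhds u (half_pos hc))] with v hvs hvu
  exact ⟨hlocal u hu v hvu, hlocal v hvs u (by rwa [dist_comm])⟩

theorem differentiableOn_of_isResolventOf {Ω : Set ℂ} (hΩ : IsOpen Ω) {G : ℂ → E →L[ℂ] E}
    (hG : ∀ z ∈ Ω, IsResolventOf T z (G z)) {c : ℝ} (hGc : ∀ z ∈ Ω, ‖G z‖ ≤ c) :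
    DifferentiableOn ℂ G Ω := by
  intro z hz
  have hcont : Filter.Tendsto G (nhds z) (nhds (G z)) := by
    rw [tendsto_iff_norm_sub_tendsto_zero]
    have hlim : Filter.Tendsto (fun w => ‖w - z‖ * (c * c)) (nhds z) (nhds 0) := by
      have : ContinuousAt (fun w => ‖w - z‖ * (c * c)) z := by fun_prop
      simpa using this.tendsto
    refine squeeze_zero' (Filter.Eventually.of_forall fun _ => norm_nonneg _) ?_ hlim
    filter_upwards [hΩ.mem_nhds hz] with w hw
    rw [(hG z hz).sub_eq (hG w hw), norm_smul]
    gcongr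
    exact (norm_mul_le _ _).trans (mul_le_mul (hGc w hw) (hGc z hz) (norm_nonneg _)
      ((norm_nonneg _).trans (hGc w hw)))
  have hslope : HasDerivAt G (G z * G z) z := by
    rw [hasDerivAt_iff_tendsto_slope]
    refine ((hcont.mono_left nhdsWithin_le_nhds).mul_const (G z)).congr' ?_
    filter_upwards [self_mem_nhdsWithin, mem_nhdsWithin_of_mem_nhds (hΩ.mem_nhds hz)] with w hwz hw
    rw [slope_def_module, (hG z hz).sub_eq (hG w hw), inv_smul_smul₀ (sub_ne_zero.mpr hwz)]
  exact hslope.differentiableAt.differentiableWithinAt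

end Resolvent

section Symmetric

variable {E : Type*} [NormedAddCommGroup E] [InnerProductSpace ℂ E]
variable {T : E →ₗ.[ℂ] E} {z w : ℂ} {R R' : E →L[ℂ] E}

theorem norm_apply_sub_smul_sq (hT : T.IsFormalAdjoint T) (z : ℂ) (x : T.domain) :
    ‖T x - z • (x : E)‖ ^ 2 = ‖T x - (z.re : ℂ) • (x : E)‖ ^ 2 + (|z.im| * ‖(x : E)‖) ^ 2 := by
  set a := T x - (z.re : ℂ) • (x : E) with ha
  have hsplit : T x - z • (x : E) = a - (z.im * Complex.I : ℂ) • (x : E) := by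
    rw [ha]
    nth_rewrite 1 [← Complex.re_add_im z]
    module
  have hreal : (inner ℂ a (x : E)).im = 0 := by
    rw [← Complex.conj_eq_iff_im, inner_conj_symm, ha, inner_sub_left, inner_sub_right,
      inner_smul_left, inner_smul_right, hT, Complex.conj_ofReal]
  have hcross : RCLike.re (inner ℂ a ((z.im * Complex.I : ℂ) • (x : E))) = 0 := by
    rw [inner_smul_right]
    simp [hreal]
  rw [hsplit, @norm_sub_sq ℂ, hcross, norm_smul]
  simp

theorem norm_apply_sub_re_smul_le (hT : T.IsFormalAdjoint T) (z : ℂ) (x : T.domain) :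
    ‖T x - (z.re : ℂ) • (x : E)‖ ≤ ‖T x - z • (x : E)‖ := by
  refine (sq_le_sq₀ (norm_nonneg _) (norm_nonneg _)).mp ?_
  rw [norm_apply_sub_smul_sq hT z]
  exact le_add_of_nonneg_right (sq_nonneg _)

theorem abs_im_mul_norm_le (hT : T.IsFormalAdjoint T) (z : ℂ) (x : T.domain) :
    |z.im| * ‖(x : E)‖ ≤ ‖T x - z • (x : E)‖ := by
  refine (sq_le_sq₀ (by positivity) (norm_nonneg _)).mp ?_
  rw [norm_apply_sub_smul_sq hT]
  exact le_add_of_nonneg_left (sq_nonneg _)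

theorem IsResolventOf.isUnit_one_sub_smul (hR : IsResolventOf T z R) (hR' : IsResolventOf T w R') :
    IsUnit (1 - (w - z) • R) := by
  refine isUnit_iff_exists.mpr ⟨1 + (w - z) • R', ?_, ?_⟩
  · have h := hR'.sub_eq hR
    rw [sub_eq_iff_eq_add] at h
    nth_rewrite 1 [sub_mul, one_mul, smul_mul_assoc, mul_add, mul_one, mul_smul_comm, h]
    module
  · have h := hR.sub_eq hR'
    rw [sub_eq_iff_eq_add] at h
    nth_rewrite 1 [add_mul, one_mul, smul_mul_assoc, mul_sub, mul_one, mul_smul_comm, h]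
    module

theorem IsResolventOf.exists_apply_eq_smul (hR : IsResolventOf T z R) {t : ℂ} (ht : t ≠ 0) {x : E}
    (hx : R x = t • x) : ∃ h : x ∈ T.domain, T ⟨x, h⟩ = (z + t⁻¹) • x := by
  obtain ⟨hRx, hTx⟩ := hR.2 (t⁻¹ • x)
  have hRx' : R (t⁻¹ • x) = x := by rw [map_smul, hx, inv_smul_smul₀ ht]
  simp only [hRx'] at hRx hTx
  exact ⟨hRx, by rw [sub_eq_iff_eq_add.mp hTx]; module⟩

theorem IsResolventOf.notMem_spectrum {ζ t : ℝ} (hR : IsResolventOf T ζ R) (ht : t ≠ 0)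
    (h : ((ζ + t⁻¹ : ℝ) : ℂ) ∈ pmResolventSet T) : t ∉ spectrum ℝ R := by
  obtain ⟨R', hR'⟩ := h
  have hunit := (hR.isUnit_one_sub_smul hR').smul (Units.mk0 t ht)
  rw [spectrum.notMem_iff]
  convert hunit using 1
  rw [Units.smul_mk0, Complex.ofReal_add, add_sub_cancel_left, smul_sub, Complex.ofReal_inv,
    Algebra.algebraMap_eq_smul_one, sub_right_inj]
  change R = (t : ℂ) • (t : ℂ)⁻¹ • R
  rw [smul_inv_smul₀ (Complex.ofReal_ne_zero.mpr ht)]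

variable [CompleteSpace E]

theorem IsResolventOf.isSelfAdjoint (hT : T.IsFormalAdjoint T) {ζ : ℝ}
    (hR : IsResolventOf T ζ R) : IsSelfAdjoint R := by
  refine ContinuousLinearMap.isSelfAdjoint_iff_isSymmetric.mpr fun a b => ?_
  obtain ⟨ha, hTa⟩ := hR.2 a
  obtain ⟨hb, hTb⟩ := hR.2 b
  have h := hT ⟨R a, ha⟩ ⟨R b, hb⟩
  rw [sub_eq_iff_eq_add.mp hTa, sub_eq_iff_eq_add.mp hTb, inner_add_left, inner_add_right,
    inner_smul_left, inner_smul_right, Complex.conj_ofReal] at h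
  exact (add_right_cancel h).symm

theorem exists_eigenvector_of_isolated_mem_spectrum {A : E →L[ℂ] E} (hA : IsSelfAdjoint A) {μ : ℝ}
    (hμ : μ ∈ spectrum ℝ A) (hiso : μ ∉ closure (spectrum ℝ A \ {μ})) :
    ∃ x, x ≠ 0 ∧ A x = (μ : ℂ) • x := by
  obtain ⟨χ, hχ₀, hχ₁, -⟩ := exists_continuous_zero_one_of_isClosed
    (isClosed_closure (s := spectrum ℝ A \ {μ})) (isClosed_singleton (x := μ))
    (Set.disjoint_singleton_right.mpr hiso)
  have hAχ : A * cfc χ A = (μ : ℂ) • cfc χ A := by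
    have : (μ : ℂ) • cfc χ A = μ • cfc χ A := rfl
    rw [this, ← cfc_smul μ χ A]
    nth_rewrite 1 [← cfc_id' ℝ A]
    rw [← cfc_mul _ _ A]
    refine cfc_congr fun t ht => ?_
    rcases eq_or_ne t μ with rfl | h
    · rfl
    · have : χ t = 0 := hχ₀ (subset_closure ⟨ht, h⟩)
      simp only [this, mul_zero, smul_zero]
  have hne : cfc χ A ≠ 0 := by
    intro h
    have := norm_apply_le_norm_cfc χ A hμ
    rw [hχ₁ rfl, h, norm_zero] at this
    norm_num at this
  obtain ⟨v, hv⟩ := DFunLike.ne_iff.mp hne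
  exact ⟨cfc χ A v, hv, DFunLike.congr_fun hAχ v⟩

theorem IsResolventOf.norm_le_of_no_eigenvalue (hT : T.IsFormalAdjoint T) {ζ s : ℝ} (hs : 0 < s)
    (hR : IsResolventOf T ζ R) (F : Finset ℝ)
    (hF : ∀ ν : ℝ, |ν - ζ| < s → ν ∉ F → (ν : ℂ) ∈ pmResolventSet T)
    (hev : ∀ ν : ℝ, |ν - ζ| < s → ∀ x : T.domain, T x = (ν : ℂ) • (x : E) → (x : E) = 0) :
    ‖R‖ ≤ s⁻¹ := by
  have hsa : IsSelfAdjoint R := hR.isSelfAdjoint hT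
  have hnear {t : ℝ} (ht : s⁻¹ < |t|) : t ≠ 0 ∧ |ζ + t⁻¹ - ζ| < s := by
    have ht0 : 0 < |t| := (inv_pos.mpr hs).trans ht
    refine ⟨abs_pos.mp ht0, ?_⟩
    rw [add_sub_cancel_left, abs_inv]
    exact inv_lt_of_inv_lt₀ hs ht
  have hfin : (spectrum ℝ R ∩ {t | s⁻¹ < |t|}).Finite := by
    refine (F.image fun ν => (ν - ζ)⁻¹).finite_toSet.subset fun t ⟨htσ, ht⟩ => ?_
    by_contra hcon
    obtain ⟨ht0, hts⟩ := hnear ht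
    refine hR.notMem_spectrum ht0 (hF _ hts fun hmem => hcon ?_) htσ
    exact Finset.mem_coe.mpr (Finset.mem_image.mpr ⟨_, hmem, by simp⟩)
  have hσ : ∀ t ∈ spectrum ℝ R, |t| ≤ s⁻¹ := by
    intro t htσ
    by_contra! ht
    obtain ⟨ht0, hts⟩ := hnear ht
    have hiso : t ∉ closure (spectrum ℝ R \ {t}) := by
      have hcl : IsClosed ((spectrum ℝ R ∩ {u | s⁻¹ < |u|}) \ {t} ∪ {u | |u| ≤ s⁻¹}) :=
        hfin.sdiff.isClosed.union (isClosed_le continuous_abs continuous_const)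
      refine fun h => (closure_minimal (fun u hu => ?_) hcl h).elim (fun h => h.2 rfl) ht.not_ge
      exact (lt_or_ge s⁻¹ |u|).imp (fun h => ⟨⟨hu.1, h⟩, hu.2⟩) id
    obtain ⟨x, hx0, hx⟩ := exists_eigenvector_of_isolated_mem_spectrum hsa htσ hiso
    obtain ⟨hxD, hTx⟩ := hR.exists_apply_eq_smul (Complex.ofReal_ne_zero.mpr ht0) hx
    exact hx0 (hev _ hts ⟨x, hxD⟩ (by rw [hTx]; push_cast; rfl))
  rw [← cfc_id' ℝ R]
  exact norm_cfc_le (inv_nonneg.mpr hs.le) hσ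

theorem mul_norm_le_of_no_eigenvalue (hT : T.IsFormalAdjoint T) (r s : ℝ) (F : Finset ℝ)
    (hF : ∀ ν : ℝ, |ν - r| < s → ν ∉ F → (ν : ℂ) ∈ pmResolventSet T)
    (hev : ∀ ν : ℝ, |ν - r| < s → ∀ x : T.domain, T x = (ν : ℂ) • (x : E) → (x : E) = 0)
    (x : T.domain) : s * ‖(x : E)‖ ≤ ‖T x - (r : ℂ) • (x : E)‖ := by
  have hoff : ∀ ζ ∉ F, (s - |ζ - r|) * ‖(x : E)‖ ≤ ‖T x - (ζ : ℂ) • (x : E)‖ := by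
    intro ζ hζ
    rcases le_or_gt (s - |ζ - r|) 0 with hneg | hpos
    · exact (mul_nonpos_of_nonpos_of_nonneg hneg (norm_nonneg _)).trans (norm_nonneg _)
    have hsub {ν : ℝ} (hν : |ν - ζ| < s - |ζ - r|) : |ν - r| < s := by
      linarith [abs_sub_le ν ζ r]
    obtain ⟨R, hR⟩ := hF ζ (by linarith) hζ
    have hRs := hR.norm_le_of_no_eigenvalue hT hpos F (fun ν hν => hF ν (hsub hν))
      fun ν hν => hev ν (hsub hν)
    rw [← le_inv_mul_iff₀ hpos]
    calc ‖(x : E)‖ = ‖R (T x - (ζ : ℂ) • (x : E))‖ := by rw [hR.1]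
      _ ≤ _ := R.le_of_opNorm_le hRs _
  have hdense : Dense {ζ : ℝ | ζ ∉ F} := F.countable_toSet.dense_compl ℝ
  have hclosed : IsClosed {ζ : ℝ | (s - |ζ - r|) * ‖(x : E)‖ ≤ ‖T x - (ζ : ℂ) • (x : E)‖} :=
    isClosed_le (by fun_prop) (by fun_prop)
  simpa using hclosed.closure_subset_iff.mpr hoff (hdense r)

end Symmetric

section Gap

theorem finrank_finset_sup_le {ι K V : Type*} [DivisionRing K] [AddCommGroup V]
    [Module K V] (s : Finset ι) (W : ι → Submodule K V)
    (hW : ∀ i ∈ s, FiniteDimensional K (W i)) :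
    FiniteDimensional K (s.sup W : Submodule K V) ∧
      Module.finrank K (s.sup W : Submodule K V) ≤ ∑ i ∈ s, Module.finrank K (W i) := by
  classical
  induction s using Finset.induction_on with
  | empty =>
    rw [Finset.sup_empty, Finset.sum_empty]
    exact ⟨inferInstance, (finrank_bot K V).le⟩
  | insert i s hi ih =>
    obtain ⟨hfd, hle⟩ := ih fun j hj => hW j (Finset.mem_insert_of_mem hj)
    have := hW i (Finset.mem_insert_self i s)
    rw [Finset.sup_insert, Finset.sum_insert hi]
    exact ⟨inferInstance, (Submodule.finrank_add_le_finrank_add_finrank _ _).trans (by gcongr)⟩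

variable {E : Type*} [NormedAddCommGroup E] [InnerProductSpace ℂ E] {T : E →ₗ.[ℂ] E}

theorem mem_pmEigenspace {z : ℂ} {x : E} :
    x ∈ pmEigenspace T z ↔ ∃ hx : x ∈ T.domain, T ⟨x, hx⟩ = z • x := by
  constructor
  · rintro ⟨x, hx, rfl⟩
    exact ⟨x.2, sub_eq_zero.mp hx⟩
  · rintro ⟨hx, h⟩
    exact ⟨⟨x, hx⟩, sub_eq_zero.mpr h, rfl⟩

theorem isFormalAdjoint_vadd (hT : T.IsFormalAdjoint T) {K : E →L[ℂ] E}
    (hK : (K : E →ₗ[ℂ] E).IsSymmetric) :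
    LinearPMap.IsFormalAdjoint ((K : E →ₗ[ℂ] E) +ᵥ T) ((K : E →ₗ[ℂ] E) +ᵥ T) := fun x y => by
  rw [LinearPMap.vadd_apply, LinearPMap.vadd_apply, inner_add_left, inner_add_right, hK]
  exact congrArg _ (hT x y)

theorem isCompactOperator_starProjection {U : Submodule ℂ E} [FiniteDimensional ℂ U] :
    IsCompactOperator U.starProjection :=
  have := FiniteDimensional.proper ℂ U
  (isCompactOperator_of_locallyCompactSpace_dom U.orthogonalProjectionOnto).clm_comp U.subtypeL

/-- The span of the eigenvectors of `T` with eigenvalue in `F`, whose dimension bounds the size of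
the perturbation determinant. -/
def eigenspaceSup (T : E →ₗ.[ℂ] E) (F : Finset ℝ) : Submodule ℂ E :=
  F.sup fun ν => pmEigenspace T (ν : ℂ)

/-- `T` has no spectrum in `(r - s, r + s)` outside the finite subset `F`, the set of eigenvalues of
`T` that a finite-rank perturbation has to remove. -/
structure IsSpectralGap (T : E →ₗ.[ℂ] E) (r s : ℝ) (F : Finset ℝ) : Prop where
  abs_sub_lt : ∀ ν ∈ F, |ν - r| < s
  mem_pmResolventSet : ∀ ν : ℝ, |ν - r| < s → ν ∉ F → (ν : ℂ) ∈ pmResolventSet T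

variable {r s : ℝ} {F : Finset ℝ}

theorem eigenvector_vadd_starProjection_eq_zero (hT : T.IsFormalAdjoint T)
    [(eigenspaceSup T F).HasOrthogonalProjection] (hF : IsSpectralGap T r s F) {ν : ℝ}
    (hν : |ν - r| < s) {x : T.domain}
    (hx : ((2 * s : ℝ) : ℂ) • (eigenspaceSup T F).starProjection x + T x = (ν : ℂ) • (x : E)) :
    (x : E) = 0 := by
  set P := (eigenspaceSup T F).starProjection
  have horth : (x : E) ∈ (eigenspaceSup T F)ᗮ := by
    suffices eigenspaceSup T F ≤ (ℂ ∙ (x : E))ᗮ from fun u hu =>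
      Submodule.mem_orthogonal_singleton_iff_inner_left.mp (this hu)
    refine Finset.sup_le fun μ hμ u hu => Submodule.mem_orthogonal_singleton_iff_inner_left.mpr ?_
    obtain ⟨huD, hTu⟩ := mem_pmEigenspace.mp hu
    have hPu : P u = u := Submodule.starProjection_eq_self_iff.mpr
      (Finset.le_sup (f := fun ν : ℝ => pmEigenspace T (ν : ℂ)) hμ hu)
    have hPx : inner ℂ u (P x) = inner ℂ u (x : E) := by
      rw [← Submodule.inner_starProjection_left_eq_right, hPu]
    have hTx : inner ℂ u (T x) = (μ : ℂ) * inner ℂ u (x : E) := by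
      rw [← hT ⟨u, huD⟩ x, hTu, inner_smul_left, Complex.conj_ofReal]
    have hpair := congrArg (inner ℂ u) hx
    rw [inner_add_right, inner_smul_right, inner_smul_right, hPx, hTx] at hpair
    have hmul : ((2 * s + μ - ν : ℝ) : ℂ) * inner ℂ u (x : E) = 0 := by
      push_cast at hpair ⊢
      linear_combination hpair
    refine (mul_eq_zero.mp hmul).resolve_left (Complex.ofReal_ne_zero.mpr ?_)
    linarith [(abs_lt.mp (hF.abs_sub_lt μ hμ)).1, (abs_lt.mp hν).2]
  have hPx : P x = 0 := (Submodule.starProjection_apply_eq_zero_iff _).mpr horth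
  rw [hPx, smul_zero, zero_add] at hx
  by_cases hνF : ν ∈ F
  · have hmem : (x : E) ∈ eigenspaceSup T F :=
      Finset.le_sup (f := fun ν : ℝ => pmEigenspace T (ν : ℂ)) hνF (mem_pmEigenspace.mpr ⟨x.2, hx⟩)
    exact Submodule.disjoint_def.mp (Submodule.orthogonal_disjoint _) _ hmem horth
  · obtain ⟨R, hR⟩ := hF.mem_pmResolventSet ν hν hνF
    rw [← hR.1, hx, sub_self, map_zero]

variable [CompleteSpace E]

theorem mul_norm_le_vadd_starProjection (hT : T.IsFormalAdjoint T)
    [FiniteDimensional ℂ (eigenspaceSup T F)] (hF : IsSpectralGap T r s F) (x : T.domain) :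
    s * ‖(x : E)‖ ≤ ‖((2 * s : ℝ) : ℂ) • (eigenspaceSup T F).starProjection x + T x
      - (r : ℂ) • (x : E)‖ := by
  set K : E →L[ℂ] E := ((2 * s : ℝ) : ℂ) • (eigenspaceSup T F).starProjection
  have hKc : IsCompactOperator K := isCompactOperator_starProjection.smul _
  have hKs : (K : E →ₗ[ℂ] E).IsSymmetric :=
    (Submodule.starProjection_isSymmetric _).smul (Complex.conj_ofReal _)
  have hev {ν : ℝ} (hν : |ν - r| < s) {x : T.domain} (hx : K x + T x = (ν : ℂ) • (x : E)) :
      (x : E) = 0 := eigenvector_vadd_starProjection_eq_zero hT hF hν hx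
  refine mul_norm_le_of_no_eigenvalue (isFormalAdjoint_vadd hT hKs) r s F (fun ν hν hνF => ?_)
    (fun ν hν x hx => hev hν hx) x
  refine (mem_pmResolventSet_vadd_or_exists_eigenvector
    (hF.mem_pmResolventSet ν hν hνF) hKc).resolve_right ?_
  rintro ⟨x, hx0, hx⟩
  exact hx0 (hev hν hx)

end Gap

/-- A holomorphic function on `Ω` bounded by `M`, with zeros at the multiset `Z` of points of `K`,
is bounded on `K` by `M * κ ^ card Z`: each zero in `K` costs a factor `κ`. This is the quantitative
form of division by Blaschke products used to count zeros. -/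
def HasBlaschkeBound (Ω K : Set ℂ) (κ : ℝ) : Prop :=
  ∀ (f : ℂ → ℂ) (M : ℝ) (Z : Multiset ℂ), DifferentiableOn ℂ f Ω → (∀ z ∈ Ω, ‖f z‖ ≤ M) →
    (∀ a ∈ Z, a ∈ K) → (∀ a ∈ Z, (Z.count a : ℕ∞) ≤ analyticOrderAt f a) →
    ∀ z ∈ K, ‖f z‖ ≤ M * κ ^ Z.card

theorem HasBlaschkeBound.of_rightInverse {Ω Ω' K K' : Set ℂ} {κ : ℝ}
    (h : HasBlaschkeBound Ω' K' κ) (hΩ : IsOpen Ω) (hΩ' : IsOpen Ω') (hK : K ⊆ Ω) (hK' : K' ⊆ Ω')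
    {ψ σ : ℂ → ℂ} (hψ : DifferentiableOn ℂ ψ Ω') (hψΩ : Set.MapsTo ψ Ω' Ω) (hσ : Set.MapsTo σ K K')
    (hψσ : ∀ z ∈ K, ψ (σ z) = z) : HasBlaschkeBound Ω K κ := by
  intro f M Z hf hM hZK hZ z hz
  have hσZ : Set.InjOn σ {a | a ∈ Z} := fun a ha b hb hab => by
    rw [← hψσ a (hZK a ha), hab, hψσ b (hZK b hb)]
  have horder : ∀ a ∈ Z, ((Z.map σ).count (σ a) : ℕ∞) ≤ analyticOrderAt (f ∘ ψ) (σ a) := by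
    intro a ha
    have haK := hZK a ha
    have hψa : AnalyticAt ℂ ψ (σ a) := hψ.analyticAt (hΩ'.mem_nhds (hK' (hσ haK)))
    have hfa : AnalyticAt ℂ f (ψ (σ a)) := by
      rw [hψσ a haK]; exact hf.analyticAt (hΩ.mem_nhds (hK haK))
    have hone : 1 ≤ analyticOrderAt (ψ · - ψ (σ a)) (σ a) := by
      rw [Order.one_le_iff_ne_zero]
      exact (hψa.sub analyticAt_const).analyticOrderAt_ne_zero.mpr (sub_self _)
    rw [Multiset.count_map_eq_count σ Z hσZ a ha, hfa.analyticOrderAt_comp hψa, hψσ a haK]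
    calc (Z.count a : ℕ∞) ≤ analyticOrderAt f a * 1 := by rw [mul_one]; exact hZ a ha
      _ ≤ _ := by rw [hψσ a haK] at hone; gcongr
  have := h (f ∘ ψ) M (Z.map σ) (hf.comp hψ hψΩ) (fun w hw => hM _ (hψΩ hw))
    (by simpa only [Multiset.forall_mem_map_iff] using fun a ha => hσ (hZK a ha))
    (by simpa only [Multiset.forall_mem_map_iff] using horder) (σ z) (hσ hz)
  rwa [Function.comp_apply, hψσ z hz, Multiset.card_map] at this

section UnitDisc

open Filter Topology Metric ComplexConjugate

theorem one_sub_conj_mul_ne_zero {a w : ℂ} (ha : ‖a‖ < 1) (hw : ‖w‖ ≤ 1) : 1 - conj a * w ≠ 0 := by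
  intro h
  have : ‖conj a * w‖ = 1 := by rw [← sub_eq_zero.mp h, norm_one]
  rw [norm_mul, Complex.norm_conj] at this
  nlinarith [norm_nonneg a, norm_nonneg w]

theorem exists_norm_sub_le_mul_norm_one_sub_conj_mul {r : ℝ} (hr₀ : 0 ≤ r) (hr : r < 1) :
    ∃ κ ∈ Set.Ico (0 : ℝ) 1, ∀ a w : ℂ, ‖a‖ ≤ r → ‖w‖ ≤ r → ‖w - a‖ ≤ κ * ‖1 - conj a * w‖ := by
  have hd : 0 < 1 - r ^ 2 := by nlinarith
  have hd' : 0 ≤ 1 - (1 - r ^ 2) ^ 2 / 4 := by nlinarith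
  refine ⟨√(1 - (1 - r ^ 2) ^ 2 / 4), ⟨Real.sqrt_nonneg _, ?_⟩, fun a w ha hw => ?_⟩
  · rw [Real.sqrt_lt' one_pos]
    nlinarith [sq_pos_of_pos hd]
  have hpseudo : ‖w - a‖ ^ 2 = ‖1 - conj a * w‖ ^ 2 - (1 - ‖a‖ ^ 2) * (1 - ‖w‖ ^ 2) := by
    simp only [Complex.sq_norm, Complex.normSq_apply, Complex.sub_re, Complex.sub_im,
      Complex.mul_re, Complex.mul_im, Complex.conj_re, Complex.conj_im, Complex.one_re,
      Complex.one_im]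
    ring
  have hden : ‖1 - conj a * w‖ ≤ 2 := by
    calc ‖1 - conj a * w‖ ≤ ‖(1 : ℂ)‖ + ‖conj a * w‖ := norm_sub_le _ _
      _ ≤ 2 := by
        rw [norm_one, norm_mul, Complex.norm_conj]
        nlinarith [norm_nonneg a, norm_nonneg w]
  have hprod : (1 - r ^ 2) ^ 2 ≤ (1 - ‖a‖ ^ 2) * (1 - ‖w‖ ^ 2) := by
    rw [sq (1 - r ^ 2)]
    have : 0 ≤ 1 - ‖a‖ ^ 2 := by nlinarith [norm_nonneg a]
    gcongr
  refine le_of_sq_le_sq ?_ (by positivity)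
  rw [mul_pow, Real.sq_sqrt hd', hpseudo]
  have hden' : ‖1 - conj a * w‖ ^ 2 ≤ 2 ^ 2 := by gcongr
  nlinarith [mul_le_mul_of_nonneg_left hden' (sq_nonneg (1 - r ^ 2))]

theorem norm_one_sub_conj_mul_le {a w : ℂ} (haw : ‖a‖ < ‖w‖) (hw : ‖w‖ ≤ 1) :
    ‖1 - conj a * w‖ ≤ (1 + (1 - ‖w‖ ^ 2) / (‖w‖ - ‖a‖)) * ‖w - a‖ := by
  have hw₀ : 0 ≤ 1 - ‖w‖ ^ 2 := by nlinarith [norm_nonneg w]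
  have hid : conj (1 - conj a * w) = ((1 - ‖w‖ ^ 2 : ℝ) : ℂ) + conj w * (w - a) := by
    rw [mul_sub, Complex.conj_mul']
    simp only [map_sub, map_one, map_mul, Complex.conj_conj, Complex.ofReal_sub,
      Complex.ofReal_one, Complex.ofReal_pow]
    ring
  have hnum : ‖1 - conj a * w‖ ≤ (1 - ‖w‖ ^ 2) + ‖w - a‖ := by
    calc ‖1 - conj a * w‖ = ‖((1 - ‖w‖ ^ 2 : ℝ) : ℂ) + conj w * (w - a)‖ := by
          rw [← hid, Complex.norm_conj]
      _ ≤ ‖((1 - ‖w‖ ^ 2 : ℝ) : ℂ)‖ + ‖conj w * (w - a)‖ := norm_add_le _ _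
      _ ≤ (1 - ‖w‖ ^ 2) + 1 * ‖w - a‖ := by
          rw [Complex.norm_of_nonneg hw₀, norm_mul, Complex.norm_conj]
          gcongr
      _ = _ := by rw [one_mul]
  have hden : 1 - ‖w‖ ^ 2 ≤ (1 - ‖w‖ ^ 2) / (‖w‖ - ‖a‖) * ‖w - a‖ := by
    rw [div_mul_eq_mul_div, le_div_iff₀ (sub_pos.mpr haw)]
    gcongr
    exact norm_sub_norm_le w a
  linarith

/-- By the maximum principle: the Blaschke factor `(z - a) / (1 - conj a * z)` has modulus close
to `1` near the unit circle. -/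
theorem norm_one_sub_conj_mul_mul_le {g : ℂ → ℂ} {M : ℝ} {a : ℂ} (ha : ‖a‖ < 1)
    (hg : DifferentiableOn ℂ g (ball 0 1)) (hM : ∀ z ∈ ball (0 : ℂ) 1, ‖(z - a) * g z‖ ≤ M)
    {z : ℂ} (hz : ‖z‖ < 1) : ‖(1 - conj a * z) * g z‖ ≤ M := by
  have hcircle : ∀ r ∈ Set.Ioo (max ‖a‖ ‖z‖) 1,
      ‖(1 - conj a * z) * g z‖ ≤ (1 + (1 - r ^ 2) / (r - ‖a‖)) * M := by
    rintro r ⟨hr, hr₁⟩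
    obtain ⟨har, hzr⟩ := max_lt_iff.mp hr
    have hr₀ : 0 < r := (norm_nonneg a).trans_lt har
    have hd : DifferentiableOn ℂ (fun w => (1 - conj a * w) * g w) (closedBall 0 r) := by
      have := hg.mono (closedBall_subset_ball hr₁)
      fun_prop
    refine Complex.norm_le_of_forall_mem_frontier_norm_le
      (f := fun w => (1 - conj a * w) * g w) isBounded_ball
      (DifferentiableOn.diffContOnCl (by rwa [closure_ball _ hr₀.ne'])) (fun w hw => ?_)
      (subset_closure (mem_ball_zero_iff.mpr hzr))
    rw [frontier_ball _ hr₀.ne', mem_sphere_zero_iff_norm] at hw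
    have hpos : 0 ≤ 1 + (1 - r ^ 2) / (r - ‖a‖) :=
      add_nonneg zero_le_one (div_nonneg (by nlinarith) (sub_pos.mpr har).le)
    have hfac := norm_one_sub_conj_mul_le (hw ▸ har) (hw ▸ hr₁.le)
    rw [hw] at hfac
    calc ‖(1 - conj a * w) * g w‖ ≤ (1 + (1 - r ^ 2) / (r - ‖a‖)) * ‖w - a‖ * ‖g w‖ := by
          rw [norm_mul]; gcongr
      _ = (1 + (1 - r ^ 2) / (r - ‖a‖)) * ‖(w - a) * g w‖ := by rw [norm_mul, mul_assoc]
      _ ≤ _ := by gcongr; exact hM w (by simpa [hw] using hr₁)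
  have hlim : Tendsto (fun r : ℝ => (1 + (1 - r ^ 2) / (r - ‖a‖)) * M) (𝓝[<] 1) (𝓝 M) := by
    have hcont : ContinuousAt (fun r : ℝ => (1 + (1 - r ^ 2) / (r - ‖a‖)) * M) 1 := by
      have : (1 : ℝ) - ‖a‖ ≠ 0 := (sub_pos.mpr ha).ne'
      fun_prop (disch := assumption)
    simpa using hcont.tendsto.mono_left nhdsWithin_le_nhds
  exact ge_of_tendsto hlim (eventually_of_mem (Ioo_mem_nhdsLT (max_lt ha hz)) hcircle)

theorem analyticOrderAt_mul_of_ne_zero {u g : ℂ → ℂ} {b : ℂ} (hu : AnalyticAt ℂ u b)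
    (hub : u b ≠ 0) (hg : AnalyticAt ℂ g b) :
    analyticOrderAt (fun z => u z * g z) b = analyticOrderAt g b := by
  change analyticOrderAt (u * g) b = _
  rw [analyticOrderAt_mul hu hg, hu.analyticOrderAt_eq_zero.mpr hub, zero_add]

theorem analyticOrderAt_sub_mul {g : ℂ → ℂ} {b : ℂ} (hg : AnalyticAt ℂ g b) (a : ℂ) :
    analyticOrderAt (fun z => (z - a) * g z) b = analyticOrderAt g b + if b = a then 1 else 0 := by
  split_ifs with hba
  · subst hba
    change analyticOrderAt ((· - b) * g) b = _
    have : analyticOrderAt (fun z : ℂ => z - b) b = 1 :=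
      (analyticAt_id (𝕜 := ℂ)).analyticOrderAt_sub_eq_one_of_deriv_ne_zero (by simp)
    rw [analyticOrderAt_mul (by fun_prop) hg, this, add_comm]
  · rw [analyticOrderAt_mul_of_ne_zero (u := fun z => z - a) (by fun_prop) (sub_ne_zero.mpr hba) hg,
      add_zero]

theorem exists_hasBlaschkeBound_ball {r : ℝ} (hr₀ : 0 ≤ r) (hr : r < 1) :
    ∃ κ ∈ Set.Ico (0 : ℝ) 1, HasBlaschkeBound (ball 0 1) (closedBall 0 r) κ := by
  obtain ⟨κ, hκ, hbound⟩ := exists_norm_sub_le_mul_norm_one_sub_conj_mul hr₀ hr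
  refine ⟨κ, hκ, fun f M Z hf hM hZK hZ z hz => ?_⟩
  induction Z using Multiset.induction_on generalizing f with
  | empty => simpa using hM z (closedBall_subset_ball hr hz)
  | cons a Z ih =>
    have ha : ‖a‖ ≤ r := mem_closedBall_zero_iff.mp (hZK a (Multiset.mem_cons_self a Z))
    have ha₁ : ball (0 : ℂ) 1 ∈ 𝓝 a := isOpen_ball.mem_nhds (by simpa using ha.trans_lt hr)
    have hfa : f a = 0 := by
      refine apply_eq_zero_of_analyticOrderAt_ne_zero fun h => ?_
      simpa [h] using hZ a (Multiset.mem_cons_self a Z)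
    have hfg : ∀ w, f w = (w - a) * dslope f a w := fun w => by
      rw [← smul_eq_mul, sub_smul_dslope, hfa, sub_zero]
    have hg : DifferentiableOn ℂ (dslope f a) (ball 0 1) :=
      (Complex.differentiableOn_dslope ha₁).mpr hf
    have horder : ∀ b ∈ Z,
        (Z.count b : ℕ∞) ≤ analyticOrderAt (fun w => (1 - conj a * w) * dslope f a w) b := by
      intro b hb
      have hbr : ‖b‖ < 1 :=
        (mem_closedBall_zero_iff.mp (hZK b (Multiset.mem_cons_of_mem hb))).trans_lt hr
      have hgb := hg.analyticAt (isOpen_ball.mem_nhds (mem_ball_zero_iff.mpr hbr))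
      have h := hZ b (Multiset.mem_cons_of_mem hb)
      rw [funext hfg, analyticOrderAt_sub_mul hgb, Multiset.count_cons, Nat.cast_add,
        Nat.cast_ite, Nat.cast_one, Nat.cast_zero] at h
      rw [analyticOrderAt_mul_of_ne_zero (u := fun w => 1 - conj a * w) (by fun_prop)
        (one_sub_conj_mul_ne_zero (ha.trans_lt hr) hbr.le) hgb]
      exact (ENat.add_le_add_iff_right (by split_ifs <;> simp)).mp h
    have hih : ‖(1 - conj a * z) * dslope f a z‖ ≤ M * κ ^ Z.card :=
      ih (fun w => (1 - conj a * w) * dslope f a w) (by fun_prop)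
        (fun w hw => norm_one_sub_conj_mul_mul_le (ha.trans_lt hr) hg
          (fun w hw => hfg w ▸ hM w hw) (mem_ball_zero_iff.mp hw))
        (fun b hb => hZK b (Multiset.mem_cons_of_mem hb)) horder
    calc ‖f z‖ = ‖z - a‖ * ‖dslope f a z‖ := by rw [hfg, norm_mul]
      _ ≤ κ * ‖1 - conj a * z‖ * ‖dslope f a z‖ := by
          gcongr; exact hbound a z ha (mem_closedBall_zero_iff.mp hz)
      _ = κ * ‖(1 - conj a * z) * dslope f a z‖ := by rw [norm_mul, mul_assoc]
      _ ≤ κ * (M * κ ^ Z.card) := by gcongr; exact hκ.1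
      _ = M * κ ^ (a ::ₘ Z).card := by rw [Multiset.card_cons]; ring

end UnitDisc

section Strip

open Metric

theorem norm_tan_lt_one {ζ : ℂ} (hζ : |ζ.re| < Real.pi / 4) : ‖Complex.tan ζ‖ < 1 := by
  have hcos : 0 < Real.cos (2 * ζ.re) :=
    Real.cos_pos_of_mem_Ioo (by constructor <;> linarith [(abs_lt.mp hζ).1, (abs_lt.mp hζ).2])
  have hsq : ‖Complex.sin ζ‖ ^ 2 + Real.cos (2 * ζ.re) = ‖Complex.cos ζ‖ ^ 2 := by
    rw [← Complex.re_add_im ζ, Complex.sin_add_mul_I, Complex.cos_add_mul_I, Complex.re_add_im,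
      Real.cos_two_mul, sub_eq_add_neg (Complex.cos _ * _), ← neg_mul]
    simp only [← Complex.ofReal_sin, ← Complex.ofReal_cos, ← Complex.ofReal_sinh,
      ← Complex.ofReal_cosh, ← Complex.ofReal_mul, ← Complex.ofReal_neg, Complex.sq_norm,
      Complex.normSq_add_mul_I]
    linear_combination (Real.sin ζ.re ^ 2 - Real.cos ζ.re ^ 2) * Real.cosh_sq ζ.im
      + Real.sin_sq_add_cos_sq ζ.re
  have hlt : ‖Complex.sin ζ‖ < ‖Complex.cos ζ‖ :=
    lt_of_pow_lt_pow_left₀ 2 (norm_nonneg _) (by linarith)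
  rw [Complex.tan, norm_div, div_lt_one ((norm_nonneg _).trans_lt hlt)]
  exact hlt

theorem re_one_add_mul_I_div_one_sub_mul_I_pos {w : ℂ} (hw : ‖w‖ < 1) :
    0 < ((1 + w * Complex.I) / (1 - w * Complex.I)).re := by
  have hne : 1 - w * Complex.I ≠ 0 := by
    intro h
    have : ‖w * Complex.I‖ = 1 := by rw [← sub_eq_zero.mp h, norm_one]
    simp only [norm_mul, Complex.norm_I, mul_one] at this
    exact hw.ne this
  have hsq : w.re ^ 2 + w.im ^ 2 < 1 := by
    rw [← Complex.normSq_add_mul_I, Complex.re_add_im, ← Complex.sq_norm]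
    nlinarith [norm_nonneg w]
  rw [Complex.div_re, ← add_div]
  refine div_pos ?_ (Complex.normSq_pos.mpr hne)
  simp only [Complex.add_re, Complex.add_im, Complex.sub_re, Complex.sub_im, Complex.mul_I_re,
    Complex.mul_I_im, Complex.one_re, Complex.one_im]
  linarith

theorem abs_re_arctan_lt {w : ℂ} (hw : ‖w‖ < 1) : |(Complex.arctan w).re| < Real.pi / 4 := by
  have harg := Complex.abs_arg_lt_pi_div_two_iff.mpr
    (Or.inl (re_one_add_mul_I_div_one_sub_mul_I_pos hw))
  have hre : (Complex.arctan w).re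
      = ((1 + w * Complex.I) / (1 - w * Complex.I)).arg / 2 := by
    rw [Complex.arctan, ← Complex.log_im, show -Complex.I / 2 = ((-(1 / 2) : ℝ) : ℂ) * Complex.I by
      push_cast; ring, mul_assoc, Complex.re_ofReal_mul, Complex.I_mul_re]
    ring
  rw [hre, abs_div, abs_two]
  linarith

theorem differentiableOn_arctan_ball : DifferentiableOn ℂ Complex.arctan (ball 0 1) := by
  intro w hw
  have hpos := re_one_add_mul_I_div_one_sub_mul_I_pos (mem_ball_zero_iff.mp hw)
  have hne : 1 - w * Complex.I ≠ 0 := fun h => by simp [h] at hpos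
  have hquot : DifferentiableAt ℂ (fun w => (1 + w * Complex.I) / (1 - w * Complex.I)) w := by
    fun_prop (disch := assumption)
  exact ((hquot.clog (Or.inl hpos)).const_mul _).differentiableWithinAt

theorem exists_hasBlaschkeBound_strip_pi_div_four {K : Set ℂ} (hK : IsCompact K)
    (hKs : K ⊆ Complex.re ⁻¹' ball 0 (Real.pi / 4)) :
    ∃ κ ∈ Set.Ico (0 : ℝ) 1, HasBlaschkeBound (Complex.re ⁻¹' ball 0 (Real.pi / 4)) K κ := by
  have hπ := Real.pi_pos
  have hre : ∀ z ∈ K, |z.re| < Real.pi / 4 := fun z hz => mem_ball_zero_iff.mp (hKs hz)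
  have harctan : ∀ z ∈ K, Complex.cos z ≠ 0 ∧ Complex.arctan (Complex.tan z) = z := by
    intro z hz
    obtain ⟨h₁, h₂⟩ := abs_lt.mp (hre z hz)
    have hne : z ≠ Real.pi / 2 := fun h => by
      rw [h, ← Complex.ofReal_ofNat, ← Complex.ofReal_div, Complex.ofReal_re] at h₂
      linarith
    exact ⟨Complex.cos_ne_zero_of_arctan_bounds hne (by linarith) (by linarith),
      Complex.arctan_tan hne (by linarith) (by linarith)⟩
  have htan : ContinuousOn Complex.tan K := fun z hz =>
    (Complex.continuousAt_tan.mpr (harctan z hz).1).continuousWithinAt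
  obtain ⟨r, hr, hKr⟩ := exists_pos_lt_subset_ball one_pos (hK.image_of_continuousOn htan).isClosed
    (Set.image_subset_iff.mpr fun z hz => mem_ball_zero_iff.mpr (norm_tan_lt_one (hre z hz)))
  obtain ⟨κ, hκ, hball⟩ := exists_hasBlaschkeBound_ball hr.1.le hr.2
  exact ⟨κ, hκ, hball.of_rightInverse (isOpen_ball.preimage Complex.continuous_re) isOpen_ball hKs
    (closedBall_subset_ball hr.2) differentiableOn_arctan_ball
    (fun w hw => mem_ball_zero_iff.mpr (abs_re_arctan_lt (mem_ball_zero_iff.mp hw)))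
    (fun z hz => ball_subset_closedBall (hKr (Set.mem_image_of_mem _ hz)))
    (fun z hz => (harctan z hz).2)⟩

theorem exists_hasBlaschkeBound_strip {δ δ' : ℝ} (hδ' : 0 < δ') (hδδ' : δ < δ') (d : ℝ) :
    ∃ κ ∈ Set.Ico (0 : ℝ) 1, ∀ r ρ : ℝ, 0 < ρ →
      HasBlaschkeBound (Complex.re ⁻¹' ball r (δ' * ρ))
        (closedBall r (δ * ρ) ×ℂ closedBall 0 (d * ρ)) κ := by
  set c : ℝ := Real.pi / 4 / δ'
  have hc₀ : 0 < c := by positivity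
  have hcδ : c * δ' = Real.pi / 4 := div_mul_cancel₀ _ hδ'.ne'
  obtain ⟨κ, hκ, hstrip⟩ := exists_hasBlaschkeBound_strip_pi_div_four
    (K := closedBall 0 (c * δ) ×ℂ closedBall 0 (c * d))
    ((isCompact_closedBall _ _).reProdIm (isCompact_closedBall _ _))
    (fun z hz => closedBall_subset_ball (by rw [← hcδ]; gcongr) hz.1)
  refine ⟨κ, hκ, fun r ρ hρ => hstrip.of_rightInverse (isOpen_ball.preimage Complex.continuous_re)
    (isOpen_ball.preimage Complex.continuous_re)
    (fun z hz => closedBall_subset_ball (by gcongr) hz.1)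
    (fun z hz => closedBall_subset_ball (by rw [← hcδ]; gcongr) hz.1)
    (ψ := fun w => r + (ρ / c : ℝ) * w) (σ := fun z => (c / ρ : ℝ) * (z - r)) (by fun_prop)
    ?_ ?_ ?_⟩
  · intro w hw
    rw [Set.mem_preimage, mem_ball_zero_iff, ← hcδ] at hw
    rw [Set.mem_preimage, mem_ball_iff_norm, Complex.add_re, Complex.ofReal_re,
      Complex.re_ofReal_mul, add_sub_cancel_left, norm_mul, Real.norm_of_nonneg (by positivity),
      div_mul_eq_mul_div, div_lt_iff₀ hc₀]
    nlinarith
  · rintro z ⟨hre, him⟩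
    simp only [Set.mem_preimage, mem_closedBall_iff_norm, sub_zero] at hre him
    refine ⟨?_, ?_⟩
    · rw [Set.mem_preimage, mem_closedBall_zero_iff, Complex.re_ofReal_mul, Complex.sub_re,
        Complex.ofReal_re, norm_mul, Real.norm_of_nonneg (by positivity)]
      calc c / ρ * ‖z.re - r‖ ≤ c / ρ * (δ * ρ) := by gcongr
        _ = c * δ := by field_simp
    · rw [Set.mem_preimage, mem_closedBall_zero_iff, Complex.im_ofReal_mul, Complex.sub_im,
        Complex.ofReal_im, sub_zero, norm_mul, Real.norm_of_nonneg (by positivity)]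
      calc c / ρ * ‖z.im‖ ≤ c / ρ * (d * ρ) := by gcongr
        _ = c * d := by field_simp
  · intro z _
    rw [← mul_assoc, ← Complex.ofReal_mul, div_mul_div_cancel₀ hc₀.ne', div_self hρ.ne',
      Complex.ofReal_one, one_mul, add_sub_cancel]

end Strip

section GenEigenspace

variable {E : Type*} [NormedAddCommGroup E] [InnerProductSpace ℂ E]
variable {A : E →ₗ.[ℂ] E} {z : ℂ} {n : ℕ} {x : E}

/-- The generalized eigenvectors of `A` of order at most `n` at `z` as a submodule; its carrier is
`pmGenEig A z n`. -/
def genEigenspace (A : E →ₗ.[ℂ] E) (z : ℂ) : ℕ → Submodule ℂ E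
  | 0 => ⊥
  | n + 1 => ((genEigenspace A z n).comap (A.toFun - z • A.domain.subtype)).map A.domain.subtype

theorem mem_genEigenspace_succ :
    x ∈ genEigenspace A z (n + 1) ↔
      ∃ hx : x ∈ A.domain, A ⟨x, hx⟩ - z • x ∈ genEigenspace A z n := by
  constructor
  · rintro ⟨x, hx, rfl⟩
    exact ⟨x.2, hx⟩
  · rintro ⟨hx, h⟩
    exact ⟨⟨x, hx⟩, h, rfl⟩

theorem mem_genEigenspace_iff_mem_pmGenEig : x ∈ genEigenspace A z n ↔ x ∈ pmGenEig A z n := by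
  induction n generalizing x with
  | zero => exact Submodule.mem_bot ℂ
  | succ n ih => exact mem_genEigenspace_succ.trans (exists_congr fun _ => ih)

theorem genEigenspace_mono : Monotone (genEigenspace A z) := by
  refine monotone_nat_of_le_succ fun n => ?_
  induction n with
  | zero => exact bot_le
  | succ n ih =>
    intro x hx
    obtain ⟨hxD, hAx⟩ := mem_genEigenspace_succ.mp hx
    exact mem_genEigenspace_succ.mpr ⟨hxD, ih hAx⟩

theorem exists_differentiable_apply_sub_smul_eq (l : ℂ) (hx : x ∈ genEigenspace A l (n + 1)) :
    ∃ u : ℂ → E, Differentiable ℂ u ∧ (x ∉ genEigenspace A l n → u l ≠ 0) ∧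
      ∀ z, ∃ h : u z ∈ A.domain, A ⟨u z, h⟩ - z • u z = -((z - l) ^ (n + 1) • x) := by
  induction n generalizing x with
  | zero =>
    obtain ⟨hxD, hAx⟩ := mem_genEigenspace_succ.mp hx
    have hAx : A ⟨x, hxD⟩ - l • x = 0 := hAx
    refine ⟨fun _ => x, differentiable_const x, fun h h0 => h ?_, fun z => ⟨hxD, ?_⟩⟩
    · exact (Submodule.mem_bot ℂ).mpr h0
    · rw [sub_eq_zero.mp hAx]
      module
  | succ n ih =>
    obtain ⟨hxD, hAx⟩ := mem_genEigenspace_succ.mp hx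
    obtain ⟨u, hu, hul, huA⟩ := ih hAx
    refine ⟨fun z => u z + (z - l) ^ (n + 1) • x, by fun_prop, fun h => ?_, fun z => ?_⟩
    · simpa using hul fun h' => h (mem_genEigenspace_succ.mpr ⟨hxD, h'⟩)
    · obtain ⟨huD, huz⟩ := huA z
      refine ⟨A.domain.add_mem huD (A.domain.smul_mem _ hxD), ?_⟩
      have hadd : A ⟨u z + (z - l) ^ (n + 1) • x, A.domain.add_mem huD (A.domain.smul_mem _ hxD)⟩ =
          A ⟨u z, huD⟩ + (z - l) ^ (n + 1) • A ⟨x, hxD⟩ := by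
        rw [← A.map_smul, ← A.map_add]; rfl
      rw [hadd, sub_eq_iff_eq_add.mp huz]
      module

theorem finrank_genEigenspace_le {W : Type*} [AddCommGroup W] [Module ℂ W] [FiniteDimensional ℂ W]
    (φ : E →ₗ[ℂ] W) (hφ : ∀ x : A.domain, A x = z • (x : E) → φ x = 0 → (x : E) = 0) (n : ℕ) :
    FiniteDimensional ℂ (genEigenspace A z n) ∧
      Module.finrank ℂ (genEigenspace A z n) ≤ n * Module.finrank ℂ W := by
  induction n with
  | zero => exact ⟨inferInstanceAs (FiniteDimensional ℂ (⊥ : Submodule ℂ E)), by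
      rw [zero_mul]; exact (finrank_bot ℂ E).le⟩
  | succ n ih =>
    obtain ⟨hfd, hle⟩ := ih
    set V := genEigenspace A z (n + 1)
    have hVD : V ≤ A.domain := fun x hx => (mem_genEigenspace_succ.mp hx).1
    set N : V →ₗ[ℂ] genEigenspace A z n :=
      ((A.toFun - z • A.domain.subtype) ∘ₗ Submodule.inclusion hVD).codRestrict _
        fun x => (mem_genEigenspace_succ.mp x.2).2
    set J : V →ₗ[ℂ] genEigenspace A z n × W := N.prod (φ ∘ₗ V.subtype)
    have hJ : Function.Injective J := by
      refine LinearMap.ker_eq_bot.mp (LinearMap.ker_eq_bot'.mpr fun x hx => Subtype.ext ?_)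
      have hNx : A ⟨x, hVD x.2⟩ - z • (x : E) = 0 := congrArg (fun y => (y.1 : E)) hx
      exact hφ ⟨x, hVD x.2⟩ (sub_eq_zero.mp hNx) (congrArg Prod.snd hx)
    refine ⟨FiniteDimensional.of_injective J hJ, ?_⟩
    have := LinearMap.finrank_le_finrank_of_injective hJ
    rw [Module.finrank_prod] at this
    linarith

end GenEigenspace

section Determinant

open scoped Matrix

theorem analyticAt_det {ι : Type*} [Fintype ι] [DecidableEq ι] {l : ℂ} {F : ℂ → Matrix ι ι ℂ}
    (hF : ∀ i j, AnalyticAt ℂ (fun z => F z i j) l) : AnalyticAt ℂ (fun z => (F z).det) l := by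
  simp only [Matrix.det_apply]
  exact Finset.analyticAt_fun_sum _ fun τ _ =>
    (Finset.analyticAt_fun_prod _ fun i _ => hF (τ i) i).const_smul

theorem le_analyticOrderAt_det {ι : Type*} [Fintype ι] [DecidableEq ι] {l : ℂ} {n : ℕ}
    {F : ℂ → Matrix ι ι ℂ} {v h : ℂ → ι → ℂ} (hF : ∀ i j, AnalyticAt ℂ (fun z => F z i j) l)
    (hh : ∀ i, AnalyticAt ℂ (fun z => h z i) l) (hv : ∀ i, AnalyticAt ℂ (fun z => v z i) l)
    (hvl : v l ≠ 0) (hFv : ∀ᶠ z in nhds l, F z *ᵥ v z = (z - l) ^ n • h z) :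
    n ≤ analyticOrderAt (fun z => (F z).det) l := by
  obtain ⟨i, hi⟩ := Function.ne_iff.mp hvl
  have hcramer : ∀ᶠ z in nhds l,
      v z i * (F z).det = (z - l) ^ n • ((F z).updateCol i (h z)).det := by
    filter_upwards [hFv] with z hz
    have hc : (F z).cramer (F z *ᵥ v z) = (F z).det • v z := by
      rw [Matrix.cramer_eq_adjugate_mulVec, Matrix.mulVec_mulVec, Matrix.adjugate_mul,
        Matrix.smul_mulVec, Matrix.one_mulVec]
    rw [hz, map_smul] at hc
    simpa [Matrix.cramer_apply, mul_comm] using (congrFun hc i).symm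
  have hFh : AnalyticAt ℂ (fun z => ((F z).updateCol i (h z)).det) l := by
    refine analyticAt_det fun j k => ?_
    by_cases hk : k = i
    · simpa [Matrix.updateCol_apply, hk] using hh j
    · simpa [Matrix.updateCol_apply, hk] using hF j k
  have hdet := analyticAt_det hF
  rw [← analyticOrderAt_mul_of_ne_zero (hv i) hi hdet]
  exact (natCast_le_analyticOrderAt ((hv i).mul hdet)).mpr ⟨_, hFh, hcramer⟩

variable {E : Type*} [NormedAddCommGroup E] [InnerProductSpace ℂ E]
variable {U : Submodule ℂ E} [FiniteDimensional ℂ U]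

/-- The coordinates of the orthogonal projection of a vector onto `U`, in an orthonormal basis. -/
def projCoords (U : Submodule ℂ E) [FiniteDimensional ℂ U] :
    E →L[ℂ] Fin (Module.finrank ℂ U) → ℂ :=
  ContinuousLinearMap.pi fun i => innerSL ℂ (stdOrthonormalBasis ℂ U i : E)

/-- The matrix of the compression of `G` to `U`, in the basis of `projCoords U`. -/
def compressionMatrix (U : Submodule ℂ E) [FiniteDimensional ℂ U] (G : E →L[ℂ] E) :
    Matrix (Fin (Module.finrank ℂ U)) (Fin (Module.finrank ℂ U)) ℂ :=
  Matrix.of fun i j => projCoords U (G (stdOrthonormalBasis ℂ U j)) i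

theorem starProjection_eq_sum_projCoords (x : E) :
    U.starProjection x = ∑ j, projCoords U x j • (stdOrthonormalBasis ℂ U j : E) := by
  simp [(stdOrthonormalBasis ℂ U).starProjection_eq_sum_rankOne, projCoords]

theorem compressionMatrix_mulVec_projCoords (G : E →L[ℂ] E) (x : E) :
    compressionMatrix U G *ᵥ projCoords U x = projCoords U (G (U.starProjection x)) := by
  rw [starProjection_eq_sum_projCoords, map_sum, map_sum]
  funext i
  simp [Matrix.mulVec, dotProduct, compressionMatrix, mul_comm]

theorem compressionMatrix_mul (G R : E →L[ℂ] E) :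
    compressionMatrix U G * compressionMatrix U R =
      compressionMatrix U (G * U.starProjection * R) := by
  ext i j
  exact congrFun (compressionMatrix_mulVec_projCoords G (R (stdOrthonormalBasis ℂ U j))) i

theorem norm_compressionMatrix_le (G : E →L[ℂ] E) (i j : Fin (Module.finrank ℂ U)) :
    ‖compressionMatrix U G i j‖ ≤ ‖G‖ := by
  have hb (k : Fin (Module.finrank ℂ U)) : ‖(stdOrthonormalBasis ℂ U k : E)‖ = 1 :=
    (stdOrthonormalBasis ℂ U).norm_eq_one k
  calc ‖compressionMatrix U G i j‖
      ≤ ‖(stdOrthonormalBasis ℂ U i : E)‖ * ‖G (stdOrthonormalBasis ℂ U j)‖ :=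
        norm_inner_le_norm _ _
    _ ≤ ‖G‖ := by simpa [hb] using G.le_opNorm (stdOrthonormalBasis ℂ U j)

/-- The determinant of `1 - σ P G` on `U`, where `P` is the orthogonal projection onto `U`. When `G`
is the resolvent at `z` of `A + σ P`, this is the perturbation determinant of `A` with respect to
`A + σ P`, whose zeros are the eigenvalues of `A`. -/
def perturbationDet (U : Submodule ℂ E) [FiniteDimensional ℂ U] (σ : ℂ) (G : E →L[ℂ] E) : ℂ :=
  (1 - σ • compressionMatrix U G).det

theorem norm_perturbationDet_le {σ : ℂ} {G : E →L[ℂ] E} {X : ℝ} (hX : 1 + ‖σ‖ * ‖G‖ ≤ X) :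
    ‖perturbationDet U σ G‖ ≤ (Module.finrank ℂ U).factorial * X ^ Module.finrank ℂ U := by
  have hentry (i j) : ‖(1 - σ • compressionMatrix U G) i j‖ ≤ X := by
    refine le_trans ?_ hX
    rw [Matrix.sub_apply, Matrix.smul_apply, smul_eq_mul]
    refine (norm_sub_le _ _).trans (add_le_add ?_ ?_)
    · rw [Matrix.one_apply]
      split_ifs <;> simp
    · rw [norm_mul]
      gcongr
      exact norm_compressionMatrix_le G i j
  have hdet := Matrix.det_le (abv := NormedField.toAbsoluteValue ℂ) hentry
  rw [Fintype.card_fin, nsmul_eq_mul] at hdet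
  exact hdet

variable {A : E →ₗ.[ℂ] E} {σ z : ℂ} {R : E →L[ℂ] E}

theorem IsResolventOf.vadd_apply {K G : E →L[ℂ] E}
    (hG : IsResolventOf ((K : E →ₗ[ℂ] E) +ᵥ A) z G) (x : A.domain) :
    (x : E) = G (K x) + G (A x - z • (x : E)) := by
  rw [← map_add, ← add_sub_assoc]
  exact (hG.1 x).symm

theorem IsResolventOf.sub_vadd_eq {K G : E →L[ℂ] E} (hR : IsResolventOf A z R)
    (hG : IsResolventOf ((K : E →ₗ[ℂ] E) +ᵥ A) z G) : R - G = G * K * R := by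
  ext y
  obtain ⟨hy, hRy⟩ := hR.2 y
  have := hG.vadd_apply ⟨R y, hy⟩
  rw [hRy] at this
  exact sub_eq_of_eq_add this

theorem perturbationDet_mul_perturbationDet_neg {G : E →L[ℂ] E} (hR : IsResolventOf A z R)
    (hG : IsResolventOf (((σ • U.starProjection : E →L[ℂ] E) : E →ₗ[ℂ] E) +ᵥ A) z G) :
    perturbationDet U σ G * perturbationDet U (-σ) R = 1 := by
  have hC : compressionMatrix U R - compressionMatrix U G =
      σ • (compressionMatrix U G * compressionMatrix U R) := by
    have := congrArg (compressionMatrix U) (hR.sub_vadd_eq hG)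
    rw [compressionMatrix_mul]
    ext i j
    simpa [compressionMatrix] using congrFun (congrFun this i) j
  rw [perturbationDet, perturbationDet, ← Matrix.det_mul,
    ← Matrix.det_one (n := Fin (Module.finrank ℂ U))]
  congr 1
  rw [neg_smul, sub_neg_eq_add, sub_mul, one_mul, mul_add, mul_one, smul_mul_assoc,
    mul_smul_comm, ← hC, smul_sub]
  abel

variable {Ω : Set ℂ} {G : ℂ → E →L[ℂ] E}

theorem analyticAt_projCoords (hΩ : IsOpen Ω) (hG : DifferentiableOn ℂ G Ω) (hz : z ∈ Ω) (x : E)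
    (i : Fin (Module.finrank ℂ U)) : AnalyticAt ℂ (fun w => projCoords U (G w x) i) z := by
  refine DifferentiableOn.analyticAt (s := Ω) ?_ (hΩ.mem_nhds hz)
  fun_prop

theorem analyticAt_one_sub_smul_compressionMatrix (hΩ : IsOpen Ω) (hG : DifferentiableOn ℂ G Ω)
    (hz : z ∈ Ω) (i j : Fin (Module.finrank ℂ U)) :
    AnalyticAt ℂ (fun w => (1 - σ • compressionMatrix U (G w)) i j) z :=
  analyticAt_const.sub ((analyticAt_projCoords hΩ hG hz _ i).const_smul (c := σ))

theorem differentiableOn_perturbationDet (hΩ : IsOpen Ω) (hG : DifferentiableOn ℂ G Ω) :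
    DifferentiableOn ℂ (fun z => perturbationDet U σ (G z)) Ω := fun _ hz =>
  (analyticAt_det (analyticAt_one_sub_smul_compressionMatrix hΩ hG hz)).differentiableWithinAt

theorem eq_zero_of_projCoords_eq_zero {G : E →L[ℂ] E}
    (hG : IsResolventOf (((σ • U.starProjection : E →L[ℂ] E) : E →ₗ[ℂ] E) +ᵥ A) z G)
    (x : A.domain) (hx : A x = z • (x : E)) (hPx : projCoords U (x : E) = 0) : (x : E) = 0 := by
  rw [hG.vadd_apply x, hx]
  simp [starProjection_eq_sum_projCoords, hPx]

theorem le_analyticOrderAt_perturbationDet (hΩ : IsOpen Ω) (hGd : DifferentiableOn ℂ G Ω)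
    (hG : ∀ z ∈ Ω,
      IsResolventOf (((σ • U.starProjection : E →L[ℂ] E) : E →ₗ[ℂ] E) +ᵥ A) z (G z))
    (hz : z ∈ Ω) {n : ℕ} {x : E} (hx : x ∈ genEigenspace A z (n + 1))
    (hxn : x ∉ genEigenspace A z n) :
    (n + 1 : ℕ) ≤ analyticOrderAt (fun z => perturbationDet U σ (G z)) z := by
  obtain ⟨u, hu, huz, huA⟩ := exists_differentiable_apply_sub_smul_eq z hx
  have hGu (w : ℂ) (hw : w ∈ Ω) :
      u w = σ • G w (U.starProjection (u w)) - (w - z) ^ (n + 1) • G w x := by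
    obtain ⟨huD, hAu⟩ := huA w
    have := (hG w hw).vadd_apply ⟨u w, huD⟩
    rw [hAu] at this
    simpa [sub_eq_add_neg] using this
  refine le_analyticOrderAt_det (v := fun w => projCoords U (u w))
    (h := fun w => -projCoords U (G w x)) (analyticAt_one_sub_smul_compressionMatrix hΩ hGd hz)
    (fun i => (analyticAt_projCoords hΩ hGd hz x i).neg)
    (fun i => Differentiable.analyticAt (by fun_prop) z) (fun h0 => ?_) ?_
  · obtain ⟨huD, hAu⟩ := huA z
    rw [sub_self, zero_pow n.succ_ne_zero, zero_smul, neg_zero] at hAu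
    exact huz hxn (eq_zero_of_projCoords_eq_zero (hG z hz) ⟨u z, huD⟩ (sub_eq_zero.mp hAu) h0)
  · filter_upwards [hΩ.mem_nhds hz] with w hw
    have := congrArg (projCoords U) (hGu w hw)
    rw [map_sub, map_smul, map_smul] at this
    rw [Matrix.sub_mulVec, Matrix.one_mulVec, Matrix.smul_mulVec,
      compressionMatrix_mulVec_projCoords, smul_neg, sub_eq_iff_eq_add, neg_add_eq_sub]
    exact this

theorem exists_mem_genEigenspace_le_analyticOrderAt (hΩ : IsOpen Ω)
    (hGd : DifferentiableOn ℂ G Ω)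
    (hG : ∀ z ∈ Ω,
      IsResolventOf (((σ • U.starProjection : E →L[ℂ] E) : E →ₗ[ℂ] E) +ᵥ A) z (G z))
    (hz : z ∈ Ω) {n : ℕ} {x : E} (hx : x ∈ genEigenspace A z n) :
    ∃ k : ℕ, x ∈ genEigenspace A z k ∧
      k ≤ analyticOrderAt (fun z => perturbationDet U σ (G z)) z := by
  induction n with
  | zero => exact ⟨0, hx, by simp⟩
  | succ n ih =>
    by_cases hxn : x ∈ genEigenspace A z n
    · exact ih hxn
    · exact ⟨n + 1, hx, le_analyticOrderAt_perturbationDet hΩ hGd hG hz hx hxn⟩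

theorem HasBlaschkeBound.norm_le_mul_pow_sum {K : Set ℂ} {κ : ℝ} (hB : HasBlaschkeBound Ω K κ)
    {f : ℂ → ℂ} {M : ℝ} (hf : DifferentiableOn ℂ f Ω) (hM : ∀ z ∈ Ω, ‖f z‖ ≤ M) {I : Finset ℂ}
    (hI : ∀ a ∈ I, a ∈ K) {N : ℂ → ℕ} (hN : ∀ a ∈ I, N a ≤ analyticOrderAt f a) (hz : z ∈ K) :
    ‖f z‖ ≤ M * κ ^ ∑ a ∈ I, N a := by
  have hmem (a : ℂ) (ha : a ∈ ∑ b ∈ I, Multiset.replicate (N b) b) : a ∈ I := by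
    obtain ⟨b, hb, hab⟩ := Multiset.mem_sum.mp ha
    exact Multiset.eq_of_mem_replicate hab ▸ hb
  have := hB f M (∑ b ∈ I, Multiset.replicate (N b) b) hf hM (fun a ha => hI a (hmem a ha))
    (fun a ha => ?_) z hz
  · simpa using this
  · simpa [Multiset.count_sum', Multiset.count_replicate, hmem a ha] using hN a (hmem a ha)

theorem card_le_sum_mul_finrank_of_linearIndependent {W : Type*} [AddCommGroup W] [Module ℂ W]
    [FiniteDimensional ℂ W] (φ : E →ₗ[ℂ] W) {I : Finset ℂ} {N : ℂ → ℕ}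
    (hφ : ∀ a ∈ I, ∀ x : A.domain, A x = a • (x : E) → φ x = 0 → (x : E) = 0) {s : Finset E}
    (hs : ∀ x ∈ s, ∃ a ∈ I, x ∈ genEigenspace A a (N a))
    (hli : LinearIndependent ℂ (fun v : s => (v : E))) :
    s.card ≤ (∑ a ∈ I, N a) * Module.finrank ℂ W := by
  obtain ⟨hfd, hle⟩ := finrank_finset_sup_le I (fun a => genEigenspace A a (N a))
    fun a ha => (finrank_genEigenspace_le φ (hφ a ha) (N a)).1
  have hspan : Submodule.span ℂ (s : Set E) ≤ I.sup fun a => genEigenspace A a (N a) := by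
    refine Submodule.span_le.mpr fun x hx => ?_
    obtain ⟨a, ha, hxa⟩ := hs x hx
    exact Finset.le_sup (f := fun a => genEigenspace A a (N a)) ha hxa
  calc s.card = Module.finrank ℂ (Submodule.span ℂ (s : Set E)) :=
        (finrank_span_finset_eq_card hli).symm
    _ ≤ _ := Submodule.finrank_mono hspan
    _ ≤ _ := hle
    _ ≤ ∑ a ∈ I, N a * Module.finrank ℂ W :=
        Finset.sum_le_sum fun a ha => (finrank_genEigenspace_le φ (hφ a ha) (N a)).2
    _ = (∑ a ∈ I, N a) * Module.finrank ℂ W := (Finset.sum_mul ..).symm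

theorem exists_finset_mem_genEigenspace {o : ℂ → ℕ∞} {K : Set ℂ} {s : Finset E}
    (hs : ∀ x ∈ s, ∃ a ∈ K, ∃ k : ℕ, x ∈ genEigenspace A a k ∧ k ≤ o a) :
    ∃ (I : Finset ℂ) (N : ℂ → ℕ), (∀ a ∈ I, a ∈ K) ∧ (∀ a, N a ≤ o a) ∧
      ∀ x ∈ s, ∃ a ∈ I, x ∈ genEigenspace A a (N a) := by
  classical
  choose! a haK k hxk hk using hs
  refine ⟨s.image a, fun b => {x ∈ s | a x = b}.sup k, fun b hb => ?_, fun b => ?_, fun x hx => ?_⟩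
  · obtain ⟨x, hx, rfl⟩ := Finset.mem_image.mp hb
    exact haK x hx
  · refine Finset.sup_induction (p := fun n : ℕ => (n : ℕ∞) ≤ o b) zero_le
      (fun i hi j hj => ?_) fun x hx => ?_
    · rcases max_choice i j with h | h <;> simpa [h]
    · obtain ⟨hxs, rfl⟩ := Finset.mem_filter.mp hx
      exact hk x hxs
  · have hkx : k x ≤ {y ∈ s | a y = a x}.sup k :=
      Finset.le_sup (f := k) (Finset.mem_filter.mpr ⟨hx, rfl⟩)
    exact ⟨a x, Finset.mem_image_of_mem a hx, genEigenspace_mono hkx (hxk x hx)⟩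

theorem HasBlaschkeBound.card_le_mul_finrank {K : Set ℂ} {κ : ℝ} (hB : HasBlaschkeBound Ω K κ)
    (hκ : κ ∈ Set.Icc (0 : ℝ) 1) (hKΩ : K ⊆ Ω) (hΩ : IsOpen Ω) (hGd : DifferentiableOn ℂ G Ω)
    (hG : ∀ z ∈ Ω,
      IsResolventOf (((σ • U.starProjection : E →L[ℂ] E) : E →ₗ[ℂ] E) +ᵥ A) z (G z))
    {X : ℝ} (hGX : ∀ z ∈ Ω, 1 + ‖σ‖ * ‖G z‖ ≤ X) (hz : z ∈ K) (hR : IsResolventOf A z R)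
    (hRX : 1 + ‖σ‖ * ‖R‖ ≤ X) {C : ℕ}
    (hC : ((Module.finrank ℂ U).factorial * X ^ Module.finrank ℂ U) ^ 2 * κ ^ C < 1)
    {s : Finset E} (hs : ∀ x ∈ s, ∃ a ∈ K, ∃ n, x ∈ genEigenspace A a n)
    (hli : LinearIndependent ℂ (fun v : s => (v : E))) : s.card ≤ C * Module.finrank ℂ U := by
  set f : ℂ → ℂ := fun z => perturbationDet U σ (G z)
  set M : ℝ := (Module.finrank ℂ U).factorial * X ^ Module.finrank ℂ U
  have hM (w : ℂ) (hw : w ∈ Ω) : ‖f w‖ ≤ M := norm_perturbationDet_le (hGX w hw)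
  have hfz : 1 ≤ ‖f z‖ * M := by
    have := congrArg norm (perturbationDet_mul_perturbationDet_neg hR (hG z (hKΩ hz)))
    rw [norm_mul, norm_one] at this
    exact this.symm.trans_le
      (mul_le_mul_of_nonneg_left (norm_perturbationDet_le (by rwa [norm_neg])) (norm_nonneg _))
  have hord (x : E) (hx : x ∈ s) :
      ∃ a ∈ K, ∃ k : ℕ, x ∈ genEigenspace A a k ∧ k ≤ analyticOrderAt f a := by
    obtain ⟨a, ha, n, hxn⟩ := hs x hx
    exact ⟨a, ha, exists_mem_genEigenspace_le_analyticOrderAt hΩ hGd hG (hKΩ ha) hxn⟩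
  obtain ⟨I, N, hIK, hN, hsI⟩ := exists_finset_mem_genEigenspace hord
  have hsum : ∑ a ∈ I, N a ≤ C := by
    by_contra! hlt
    have hfM := hB.norm_le_mul_pow_sum (differentiableOn_perturbationDet hΩ hGd) hM hIK
      (fun a _ => hN a) hz
    have hpow : κ ^ ∑ a ∈ I, N a ≤ κ ^ C := pow_le_pow_of_le_one hκ.1 hκ.2 hlt.le
    have hM0 : 0 ≤ M := (norm_nonneg _).trans (hM z (hKΩ hz))
    nlinarith [mul_le_mul_of_nonneg_right hfM hM0, mul_le_mul_of_nonneg_left hpow (sq_nonneg M)]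
  calc s.card ≤ (∑ a ∈ I, N a) * Module.finrank ℂ (Fin (Module.finrank ℂ U) → ℂ) :=
        card_le_sum_mul_finrank_of_linearIndependent (projCoords U : E →ₗ[ℂ] _)
          (fun a ha => eq_zero_of_projCoords_eq_zero (hG a (hKΩ (hIK a ha)))) hsI hli
    _ ≤ C * Module.finrank ℂ U := by
        rw [Module.finrank_fin_fun]
        gcongr

end Determinant

section Subordination

open Filter Topology

theorem rpow_mul_rpow_one_sub_le {p l t y : ℝ} (hp : p ∈ Set.Icc (0 : ℝ) 1) (hl : 0 < l)
    (ht : 0 ≤ t) (hy : 0 ≤ y) :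
    t ^ p * y ^ (1 - p) ≤ l ^ (p - 1) * (p * t + (1 - p) * (l * y)) := by
  have hAM := Real.geom_mean_le_arith_mean2_weighted hp.1 (sub_nonneg.mpr hp.2) ht
    (mul_nonneg hl.le hy) (add_sub_cancel p 1)
  have hl1 : l ^ (p - 1) * l ^ (1 - p) = 1 := by
    rw [← Real.rpow_add hl, sub_add_sub_cancel, sub_self, Real.rpow_zero]
  calc t ^ p * y ^ (1 - p) = l ^ (p - 1) * (t ^ p * (l * y) ^ (1 - p)) := by
        rw [Real.mul_rpow hl.le hy]
        linear_combination -(t ^ p * y ^ (1 - p)) * hl1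
    _ ≤ l ^ (p - 1) * (p * t + (1 - p) * (l * y)) := by gcongr

theorem tendsto_subordination_factor {p b M d c : ℝ} (hp : p ∈ Set.Ico (0 : ℝ) 1)
    (hM : p = 0 → M = 0) :
    Tendsto (fun l : ℝ => b * p * l ^ (p - 1) * (1 + c / d) + b / d + M / d * l ^ (-p)) atTop
      (𝓝 (b / d)) := by
  have h1 : Tendsto (fun l : ℝ => l ^ (p - 1)) atTop (𝓝 0) := by
    simpa using tendsto_rpow_neg_atTop (sub_pos.mpr hp.2)
  have h2 : Tendsto (fun l : ℝ => M / d * l ^ (-p)) atTop (𝓝 0) := by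
    rcases hp.1.eq_or_lt with h0 | h0
    · simp [hM h0.symm]
    · simpa using (tendsto_rpow_neg_atTop h0).const_mul (M / d)
  simpa using (((h1.const_mul (b * p)).mul_const (1 + c / d)).add_const (b / d)).add h2

theorem subordination_le_mul {p b M d c l t y u : ℝ} (hp : p ∈ Set.Icc (0 : ℝ) 1) (hb : 0 ≤ b)
    (hM : 0 ≤ M) (hd : 0 < d) (hc : 0 ≤ c) (hl : 0 < l) (ht : 0 ≤ t) (hy : 0 ≤ y)
    (hyu : d * l ^ p * y ≤ u) (htu : t ≤ u + (l + c * l ^ p) * y) :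
    b * t ^ p * y ^ (1 - p) + M * y ≤
      (b * p * l ^ (p - 1) * (1 + c / d) + b / d + M / d * l ^ (-p)) * u := by
  have hlp : 0 < l ^ p := Real.rpow_pos_of_pos hl p
  have hl1 : 0 < l ^ (p - 1) := Real.rpow_pos_of_pos hl _
  have hlpy : l ^ p * y ≤ u / d := (le_div_iff₀ hd).mpr (by linarith)
  have hyd : y ≤ u / d * l ^ (-p) := by
    rw [Real.rpow_neg hl.le, ← div_eq_mul_inv, le_div_iff₀ hlp]
    linarith
  have hll : l ^ (p - 1) * l = l ^ p := by
    rw [← Real.rpow_add_one hl.ne', sub_add_cancel]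
  have hAM : p * t + (1 - p) * (l * y) ≤ p * u + l * y + p * c * (l ^ p * y) := by
    linarith [mul_le_mul_of_nonneg_left htu hp.1]
  have hpy : t ^ p * y ^ (1 - p) ≤ l ^ (p - 1) * (p * u + l * y + p * c * (l ^ p * y)) :=
    (rpow_mul_rpow_one_sub_le hp hl ht hy).trans (mul_le_mul_of_nonneg_left hAM hl1.le)
  calc b * t ^ p * y ^ (1 - p) + M * y
      ≤ b * (l ^ (p - 1) * (p * u + l * y + p * c * (l ^ p * y))) + M * y := by
        rw [mul_assoc]
        gcongr
    _ = b * (l ^ (p - 1) * (p * u + p * c * (l ^ p * y)) + l ^ p * y) + M * y := by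
        linear_combination b * y * hll
    _ ≤ b * (l ^ (p - 1) * (p * u + p * c * (u / d)) + u / d) + M * (u / d * l ^ (-p)) := by
        have := hp.1
        gcongr
    _ = _ := by ring

theorem exists_forall_subordination_le_mul {p b M d c : ℝ} (hp : p ∈ Set.Ico (0 : ℝ) 1)
    (hb : 0 < b) (hbd : b < d) (hM : 0 ≤ M) (hM0 : p = 0 → M = 0) (hc : 0 ≤ c) :
    ∃ R q : ℝ, 0 < R ∧ q < 1 ∧ ∀ l t y u : ℝ, R ≤ l → 0 ≤ t → 0 ≤ y → d * l ^ p * y ≤ u →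
      t ≤ u + (l + c * l ^ p) * y → b * t ^ p * y ^ (1 - p) + M * y ≤ q * u := by
  have hd : 0 < d := hb.trans hbd
  obtain ⟨q, hbq, hq⟩ := exists_between ((div_lt_one hd).mpr hbd)
  obtain ⟨R, hR⟩ := eventually_atTop.mp
    ((tendsto_subordination_factor (c := c) hp hM0).eventually_lt_const hbq)
  refine ⟨max R 1, q, by positivity, hq, fun l t y u hl ht hy hyu htu => ?_⟩
  have hl0 : 0 < l := one_pos.trans_le ((le_max_right R 1).trans hl)
  have hu : 0 ≤ u := le_trans (by positivity) hyu
  calc _ ≤ _ := subordination_le_mul ⟨hp.1, hp.2.le⟩ hb.le hM hd hc hl0 ht hy hyu htu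
    _ ≤ q * u := mul_le_mul_of_nonneg_right (hR l ((le_max_left R 1).trans hl)).le hu

theorem rpow_inv_one_sub_le_of_mul_rpow_le {p b g : ℝ} (hp : p < 1) (hb : 0 ≤ b) (hg : 0 < g)
    (h : b * g ^ p ≤ g) : b ^ (1 - p)⁻¹ ≤ g := by
  rw [Real.rpow_inv_le_iff_of_pos hb hg.le (sub_pos.mpr hp), Real.rpow_sub hg, Real.rpow_one,
    le_div_iff₀ (Real.rpow_pos_of_pos hg p)]
  exact h

theorem rpow_inv_one_sub_le_sub {p b x y : ℝ} (hp : p ∈ Set.Ico (0 : ℝ) 1) (hb : 0 ≤ b)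
    (hxy : x < y) (h : b * (|x| ^ p + |y| ^ p) ≤ y - x) : b ^ (1 - p)⁻¹ ≤ y - x := by
  refine rpow_inv_one_sub_le_of_mul_rpow_le hp.2 hb (sub_pos.mpr hxy) (le_trans ?_ h)
  gcongr
  calc (y - x) ^ p ≤ (|x| + |y|) ^ p := by
        gcongr
        exacts [hp.1, by linarith [neg_abs_le x, le_abs_self y]]
    _ ≤ |x| ^ p + |y| ^ p := Real.rpow_add_le_add_rpow (abs_nonneg x) (abs_nonneg y) hp.1 hp.2.le

theorem exists_forall_le_abs_of_add_le {x : ℤ → ℝ} {η : ℝ} (hη : 0 < η)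
    (hx : ∀ k, x k + η ≤ x (k + 1)) (R : ℝ) : ∃ N : ℕ, ∀ k : ℤ, N ≤ |k| → R ≤ |x k| := by
  have hmono : Monotone fun k : ℤ => x k - η * k :=
    monotone_int_of_le_succ fun k => by push_cast; linarith [hx k]
  obtain ⟨N, hN⟩ := exists_nat_ge ((R + |x 0|) / η)
  refine ⟨N, fun k hk => ?_⟩
  have hk' : R + |x 0| ≤ η * |(k : ℝ)| := by
    rw [div_le_iff₀' hη] at hN
    exact hN.trans (mul_le_mul_of_nonneg_left (by exact_mod_cast hk) hη.le)
  rcases le_total 0 k with h0 | h0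
  · have h := hmono h0
    rw [abs_of_nonneg (a := (k : ℝ)) (by exact_mod_cast h0)] at hk'
    norm_num at h
    linarith [neg_abs_le (x 0), le_abs_self (x k)]
  · have h := hmono h0
    rw [abs_of_nonpos (a := (k : ℝ)) (by exact_mod_cast h0)] at hk'
    norm_num at h
    linarith [le_abs_self (x 0), neg_le_abs (x k)]

end Subordination

section RelativelySmall

variable {E : Type*} [NormedAddCommGroup E] [InnerProductSpace ℂ E] {T B : E →ₗ.[ℂ] E}
variable {hle : T.domain ≤ B.domain} {p b c d h q r t l μ : ℝ} {z w : ℂ} {K : E →L[ℂ] E}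

/-- Smallness of `B` relative to `T` on the scale `μ` up to height `l`, the form in which
subordination is exploited. The number `u` stands for `‖(T' - z) x‖`, where `T'` is `T` or a bounded
perturbation of it, so that a single hypothesis serves all `z` and `T'` under consideration. -/
def RelSmallAt (T B : E →ₗ.[ℂ] E) (hle : T.domain ≤ B.domain) (μ l q : ℝ) : Prop :=
  ∀ (x : T.domain) (u : ℝ), μ * ‖(x : E)‖ ≤ u → ‖T x‖ ≤ u + l * ‖(x : E)‖ →
    ‖B ⟨x, hle x.2⟩‖ ≤ q * u

theorem exists_forall_relSmallAt (hp : p ∈ Set.Ico (0 : ℝ) 1) (hb : b ∈ SubordSet T B hle p)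
    (hbd : b < d) (hc : 0 ≤ c) :
    ∃ R q, 0 < R ∧ q < 1 ∧ ∀ l, R ≤ l → RelSmallAt T B hle (d * l ^ p) (l + c * l ^ p) q := by
  obtain ⟨hb0, M, hM, hM0, hB⟩ := hb
  obtain ⟨R, q, hR, hq, h⟩ := exists_forall_subordination_le_mul hp hb0 hbd hM hM0 hc
  exact ⟨R, q, hR, hq, fun l hl x u hu hTu =>
    (hB x).trans (h l _ _ u hl (norm_nonneg _) (norm_nonneg _) hu hTu)⟩

theorem RelSmallAt.vadd (hB : RelSmallAt T B hle μ (l + ‖K‖) q) :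
    RelSmallAt ((K : E →ₗ[ℂ] E) +ᵥ T) B hle μ l q := by
  refine fun x u hu hTu => hB x u hu ?_
  have hKT : T x = ((K : E →ₗ[ℂ] E) +ᵥ T) x - K x := (add_sub_cancel_left _ _).symm
  calc ‖T x‖ ≤ ‖((K : E →ₗ[ℂ] E) +ᵥ T) x‖ + ‖K x‖ := hKT ▸ norm_sub_le _ _
    _ ≤ u + l * ‖(x : E)‖ + ‖K‖ * ‖(x : E)‖ := add_le_add hTu (K.le_opNorm _)
    _ = u + (l + ‖K‖) * ‖(x : E)‖ := by ring

theorem pmSum_vadd (K : E →ₗ[ℂ] E) :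
    pmSum (K +ᵥ T) B hle = K +ᵥ pmSum T B hle :=
  LinearPMap.ext rfl fun _ _ _ => add_assoc _ _ _

theorem mul_norm_le_of_abs_re_sub_le (hT : T.IsFormalAdjoint T)
    (hgap : ∀ x : T.domain, (t + μ) * ‖(x : E)‖ ≤ ‖T x - (r : ℂ) • (x : E)‖)
    (hz : |z.re - r| ≤ t) (x : T.domain) : μ * ‖(x : E)‖ ≤ ‖T x - z • (x : E)‖ := by
  have htri : ‖T x - (r : ℂ) • (x : E)‖ ≤
      ‖T x - (z.re : ℂ) • (x : E)‖ + |z.re - r| * ‖(x : E)‖ := by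
    rw [← Real.norm_eq_abs, ← Complex.norm_real, ← norm_smul]
    refine (congrArg norm ?_).trans_le (norm_add_le _ _)
    push_cast
    module
  linarith [hgap x, norm_apply_sub_re_smul_le hT z x,
    mul_le_mul_of_nonneg_right hz (norm_nonneg (x : E))]

variable [CompleteSpace E]

theorem RelSmallAt.exists_isResolventOf_pmSum (hB : RelSmallAt T B hle μ l q) (hμ : 0 < μ)
    (hq : q < 1) (hT : T.IsFormalAdjoint T) (hz : z ∈ pmResolventSet T) (hzl : |z.re| ≤ l)
    (hTz : ∀ x : T.domain, μ * ‖(x : E)‖ ≤ ‖T x - z • (x : E)‖) :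
    ∃ R, IsResolventOf (pmSum T B hle) z R ∧ ‖R‖ ≤ ((1 - q) * μ)⁻¹ := by
  have hBz (x : T.domain) : ‖B ⟨x, hle x.2⟩‖ ≤ q * ‖T x - z • (x : E)‖ := by
    refine hB x _ (hTz x) ?_
    calc ‖T x‖ ≤ ‖T x - (z.re : ℂ) • (x : E)‖ + ‖(z.re : ℂ) • (x : E)‖ := norm_le_norm_sub_add _ _
      _ ≤ ‖T x - z • (x : E)‖ + l * ‖(x : E)‖ := by
        rw [norm_smul, Complex.norm_real, Real.norm_eq_abs]
        gcongr
        exact norm_apply_sub_re_smul_le hT z x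
  have hsum (x : T.domain) :
      pmSum T B hle x - z • (x : E) = T x - z • (x : E) + B ⟨x, hle x.2⟩ :=
    add_sub_right_comm _ _ _
  obtain ⟨R, hR⟩ := mem_pmResolventSet_of_norm_sub_le (L := T.toFun) (w := z) hz hq
    (L' := (pmSum T B hle).toFun) fun x =>
      (congrArg norm ((congrArg (· - _) (hsum x)).trans (add_sub_cancel_left _ _))).trans_le (hBz x)
  refine ⟨R, hR, hR.norm_le_inv (mul_pos (sub_pos.mpr hq) hμ) fun x => ?_⟩
  calc (1 - q) * μ * ‖(x : E)‖ = (1 - q) * (μ * ‖(x : E)‖) := mul_assoc _ _ _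
    _ ≤ (1 - q) * ‖T x - z • (x : E)‖ := mul_le_mul_of_nonneg_left (hTz x) (sub_pos.mpr hq).le
    _ ≤ ‖T x - z • (x : E)‖ - ‖B ⟨x, hle x.2⟩‖ := by linarith [hBz x]
    _ ≤ ‖pmSum T B hle x - z • (x : E)‖ := hsum x ▸ norm_sub_le_norm_add _ _

theorem RelSmallAt.exists_isResolventOf_pmSum_of_le_abs_im (hB : RelSmallAt T B hle μ l q)
    (hμ : 0 < μ) (hq : q < 1) (hT : T.IsFormalAdjoint T)
    (hnr : ∀ z : ℂ, z.im ≠ 0 → z ∈ pmResolventSet T) (hzl : |z.re| ≤ l) (hz : μ ≤ |z.im|) :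
    ∃ R, IsResolventOf (pmSum T B hle) z R ∧ ‖R‖ ≤ ((1 - q) * μ)⁻¹ :=
  hB.exists_isResolventOf_pmSum hμ hq hT (hnr z (abs_pos.mp (hμ.trans_le hz))) hzl fun x =>
    (mul_le_mul_of_nonneg_right hz (norm_nonneg _)).trans (abs_im_mul_norm_le hT z x)

theorem exists_forall_pmSpectrum_pmSum_abs_im_lt (hT : T.IsFormalAdjoint T)
    (hnr : ∀ z : ℂ, z.im ≠ 0 → z ∈ pmResolventSet T) (hp : p ∈ Set.Ico (0 : ℝ) 1)
    (hb : b ∈ SubordSet T B hle p) (hbh : b < h) :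
    ∃ R₀ : ℝ, 0 < R₀ ∧ ∀ z ∈ pmSpectrum (pmSum T B hle), R₀ ≤ ‖z‖ → |z.im| < h * |z.re| ^ p := by
  obtain ⟨R, q, hR, hq, hB⟩ := exists_forall_relSmallAt hp hb hbh le_rfl
  have hh : 0 < h := hb.1.trans hbh
  refine ⟨R + h * R ^ p, by positivity, fun z hz hRz => not_le.mp fun hcon => hz ?_⟩
  have hl : R ≤ max |z.re| R := le_max_right _ _
  have him : h * max |z.re| R ^ p ≤ |z.im| := by
    rcases le_total R |z.re| with hre | hre
    · rwa [max_eq_left hre]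
    · rw [max_eq_right hre]
      linarith [Complex.norm_le_abs_re_add_abs_im z]
  have hre : |z.re| ≤ max |z.re| R + 0 * max |z.re| R ^ p := by
    rw [zero_mul, add_zero]
    exact le_max_left _ _
  obtain ⟨S, hS, -⟩ := (hB _ hl).exists_isResolventOf_pmSum_of_le_abs_im
    (mul_pos hh (Real.rpow_pos_of_pos (hR.trans_le hl) p)) hq hT hnr hre him
  exact ⟨S, hS⟩

theorem mem_pmResolventSet_vadd_of_im_ne_zero (hT : T.IsFormalAdjoint T)
    (hK : IsCompactOperator K) (hKs : (K : E →ₗ[ℂ] E).IsSymmetric) (hz : z ∈ pmResolventSet T)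
    (hzi : z.im ≠ 0) : z ∈ pmResolventSet ((K : E →ₗ[ℂ] E) +ᵥ T) := by
  refine (mem_pmResolventSet_vadd_or_exists_eigenvector hz hK).resolve_right ?_
  rintro ⟨x, hx0, hx⟩
  have hle := abs_im_mul_norm_le (isFormalAdjoint_vadd hT hKs) z x
  have h0 : ((K : E →ₗ[ℂ] E) +ᵥ T) x - z • (x : E) = 0 := sub_eq_zero.mpr hx
  rw [h0, norm_zero] at hle
  exact hle.not_gt (mul_pos (abs_pos.mpr hzi) (norm_pos_iff.mpr hx0))

theorem mem_pmResolventSet_of_abs_re_sub_le (hT : T.IsFormalAdjoint T) (hμ : 0 < μ)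
    (hgap : ∀ x : T.domain, (t + μ) * ‖(x : E)‖ ≤ ‖T x - (r : ℂ) • (x : E)‖)
    (hw : w ∈ pmResolventSet T) (hwr : |w.re - r| ≤ t) (hz : |z.re - r| ≤ t) :
    z ∈ pmResolventSet T := by
  have hconv : Convex ℝ (Complex.re ⁻¹' Metric.closedBall r t) :=
    (convex_closedBall r t).is_linear_preimage Complex.reLm.isLinear
  exact subset_pmResolventSet_of_isPreconnected hconv.isPreconnected hμ (L := T.toFun)
    (fun z hz x => mul_norm_le_of_abs_re_sub_le hT hgap hz x) hwr hw hz

theorem mem_pmResolventSet_or_exists_eigenvector_of_vadd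
    (hz : z ∈ pmResolventSet ((K : E →ₗ[ℂ] E) +ᵥ T)) (hK : IsCompactOperator K) :
    z ∈ pmResolventSet T ∨ ∃ x : T.domain, (x : E) ≠ 0 ∧ T x = z • (x : E) := by
  have hneg : ((-K : E →L[ℂ] E) : E →ₗ[ℂ] E) +ᵥ ((K : E →ₗ[ℂ] E) +ᵥ T) = T :=
    neg_vadd_vadd (K : E →ₗ[ℂ] E) T
  have := mem_pmResolventSet_vadd_or_exists_eigenvector (K := -K) hz hK.neg
  rw [hneg] at this
  refine this.imp_right ?_
  rintro ⟨x, hx0, hx⟩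
  exact ⟨x, hx0, (neg_add_cancel_left (K x) (T x)).symm.trans hx⟩

end RelativelySmall

section SpectralGap

variable {E : Type*} [NormedAddCommGroup E] [InnerProductSpace ℂ E]
variable {T B : E →ₗ.[ℂ] E} {hle : T.domain ≤ B.domain} {p b b₁ q r t t' δ μ κ X : ℝ} {z : ℂ}
variable {F : Finset ℝ}

/-- The finite-rank operator `2 s P`, with `P` the orthogonal projection onto the span of the
eigenvectors of `T` with eigenvalue in `F`. Adding it to `T` moves these eigenvalues out of a gap of
half-width `s`. -/
def gapShift (T : E →ₗ.[ℂ] E) (F : Finset ℝ) [FiniteDimensional ℂ (eigenspaceSup T F)] (s : ℝ) :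
    E →L[ℂ] E :=
  ((2 * s : ℝ) : ℂ) • (eigenspaceSup T F).starProjection

variable [FiniteDimensional ℂ (eigenspaceSup T F)]

theorem isCompactOperator_gapShift (s : ℝ) : IsCompactOperator (gapShift T F s) :=
  isCompactOperator_starProjection.smul _

theorem norm_gapShift_le {s : ℝ} (hs : 0 ≤ s) : ‖gapShift T F s‖ ≤ 2 * s := by
  rw [gapShift, norm_smul, Complex.norm_real, Real.norm_of_nonneg (by positivity)]
  exact mul_le_of_le_one_right (by positivity) (Submodule.starProjection_norm_le _)

variable [CompleteSpace E]

theorem RelSmallAt.exists_isResolventOf_gapShift_vadd_pmSum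
    (hB : RelSmallAt T B hle μ (|r| + t + 2 * (t + μ)) q) (hT : T.IsFormalAdjoint T)
    (hnr : ∀ z : ℂ, z.im ≠ 0 → z ∈ pmResolventSet T) (hF : IsSpectralGap T r (t + μ) F)
    (ht : 0 ≤ t) (hμ : 0 < μ) (hq : q < 1) (hz : |z.re - r| ≤ t) :
    ∃ G, IsResolventOf ((gapShift T F (t + μ) : E →ₗ[ℂ] E) +ᵥ pmSum T B hle) z G ∧
      ‖G‖ ≤ ((1 - q) * μ)⁻¹ := by
  have hKs : (gapShift T F (t + μ) : E →ₗ[ℂ] E).IsSymmetric :=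
    (Submodule.starProjection_isSymmetric _).smul (Complex.conj_ofReal _)
  have hS := isFormalAdjoint_vadd hT hKs
  have hgap := mul_norm_le_vadd_starProjection hT hF
  have hBS : RelSmallAt ((gapShift T F (t + μ) : E →ₗ[ℂ] E) +ᵥ T) B hle μ (|r| + t) q :=
    RelSmallAt.vadd fun x u hu hTu => hB x u hu (hTu.trans (by
      gcongr; exact norm_gapShift_le (by positivity)))
  have hw : (r + Complex.I : ℂ) ∈ pmResolventSet ((gapShift T F (t + μ) : E →ₗ[ℂ] E) +ᵥ T) :=
    mem_pmResolventSet_vadd_of_im_ne_zero hT (isCompactOperator_gapShift _) hKs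
      (hnr _ (by simp)) (by simp)
  have hzS := mem_pmResolventSet_of_abs_re_sub_le hS hμ hgap hw (by simpa using ht) hz
  rw [← pmSum_vadd]
  refine hBS.exists_isResolventOf_pmSum hμ hq hS hzS ?_ (mul_norm_le_of_abs_re_sub_le hS hgap hz)
  linarith [abs_sub_abs_le_abs_sub z.re r]

theorem RelSmallAt.exists_eigenvector_of_mem_pmSpectrum
    (hB : RelSmallAt T B hle μ (|r| + t + 2 * (t + μ)) q) (hT : T.IsFormalAdjoint T)
    (hnr : ∀ z : ℂ, z.im ≠ 0 → z ∈ pmResolventSet T) (hF : IsSpectralGap T r (t + μ) F)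
    (ht : 0 ≤ t) (hμ : 0 < μ) (hq : q < 1) (hz : z ∈ pmSpectrum (pmSum T B hle))
    (hzr : |z.re - r| ≤ t) :
    ∃ x : (pmSum T B hle).domain, (x : E) ≠ 0 ∧ pmSum T B hle x = z • (x : E) := by
  obtain ⟨G, hG, -⟩ := hB.exists_isResolventOf_gapShift_vadd_pmSum hT hnr hF ht hμ hq hzr
  exact (mem_pmResolventSet_or_exists_eigenvector_of_vadd ⟨G, hG⟩
    (isCompactOperator_gapShift _)).resolve_left hz

theorem RelSmallAt.card_le_mul_finrank
    (hB : RelSmallAt T B hle μ (|r| + t + 2 * (t + μ)) q) (hT : T.IsFormalAdjoint T)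
    (hnr : ∀ z : ℂ, z.im ≠ 0 → z ∈ pmResolventSet T) (hF : IsSpectralGap T r (t + μ) F)
    (hμ : 0 < μ) (hq : q < 1) (ht' : 0 ≤ t') (htt' : t' < t)
    (hΩ : HasBlaschkeBound (Complex.re ⁻¹' Metric.ball r t)
      (Metric.closedBall r t' ×ℂ Metric.closedBall 0 μ) κ) (hκ : κ ∈ Set.Icc (0 : ℝ) 1)
    (hX : 1 + 2 * (t + μ) * ((1 - q) * μ)⁻¹ ≤ X) {C : ℕ}
    (hC : ((Module.finrank ℂ (eigenspaceSup T F)).factorial *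
      X ^ Module.finrank ℂ (eigenspaceSup T F)) ^ 2 * κ ^ C < 1) {s : Finset E}
    (hs : ∀ x ∈ s, ∃ a ∈ pmSpectrum (pmSum T B hle),
      |a.re - r| ≤ t' ∧ ∃ n, x ∈ genEigenspace (pmSum T B hle) a n)
    (hli : LinearIndependent ℂ (fun v : s => (v : E))) :
    s.card ≤ C * Module.finrank ℂ (eigenspaceSup T F) := by
  have ht : 0 ≤ t := ht'.trans htt'.le
  have hΩo : IsOpen (Complex.re ⁻¹' Metric.ball r t) :=
    Metric.isOpen_ball.preimage Complex.continuous_re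
  have hout (z : ℂ) (hzr : |z.re - r| ≤ t') (hzi : μ ≤ |z.im|) :
      ∃ R, IsResolventOf (pmSum T B hle) z R ∧ ‖R‖ ≤ ((1 - q) * μ)⁻¹ :=
    hB.exists_isResolventOf_pmSum_of_le_abs_im hμ hq hT hnr
      (by linarith [abs_sub_abs_le_abs_sub z.re r]) hzi
  have hin (z : ℂ) (hz : z ∈ Complex.re ⁻¹' Metric.ball r t) :=
    hB.exists_isResolventOf_gapShift_vadd_pmSum (z := z) hT hnr hF ht hμ hq (le_of_lt hz)
  choose! G hG hGn using hin
  have hσX {S : E →L[ℂ] E} (hS : ‖S‖ ≤ ((1 - q) * μ)⁻¹) :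
      1 + ‖((2 * (t + μ) : ℝ) : ℂ)‖ * ‖S‖ ≤ X := by
    rw [Complex.norm_real, Real.norm_of_nonneg (by positivity)]
    exact le_trans (by gcongr) hX
  obtain ⟨R, hR, hRn⟩ := hout (r + μ * Complex.I) (by simpa using ht') (by simp [le_abs_self])
  refine hΩ.card_le_mul_finrank hκ (fun z hz => hz.1.trans_lt htt') hΩo
    (differentiableOn_of_isResolventOf hΩo hG hGn) hG (fun z hz => hσX (hGn z hz))
    (z := r + μ * Complex.I) ⟨by simpa using ht', by simp [abs_of_pos hμ]⟩ hR (hσX hRn) hC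
    (fun x hx => ?_) hli
  obtain ⟨a, ha, har, hax⟩ := hs x hx
  refine ⟨a, ⟨har, mem_closedBall_zero_iff.mpr (le_of_not_ge fun hai => ha ?_)⟩, hax⟩
  obtain ⟨S, hS, -⟩ := hout a har hai
  exact ⟨S, hS⟩

theorem exists_forall_card_le_of_isSpectralGap (hT : T.IsFormalAdjoint T)
    (hnr : ∀ z : ℂ, z.im ≠ 0 → z ∈ pmResolventSet T) (hp : p ∈ Set.Ico (0 : ℝ) 1)
    (hb : b ∈ SubordSet T B hle p) (hδ : 0 < δ) (hbδ : b < b₁ - δ) (m : ℕ) :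
    ∃ (R : ℝ) (C : ℕ), ∀ (r : ℝ) (F : Finset ℝ), R ≤ |r| → IsSpectralGap T r (b₁ * |r| ^ p) F →
      (∀ ν ∈ F, FiniteDimensional ℂ (pmEigenspace T (ν : ℂ))) →
      ∑ ν ∈ F, Module.finrank ℂ (pmEigenspace T (ν : ℂ)) ≤ m →
      (∀ z ∈ pmSpectrum (pmSum T B hle), |z.re - r| ≤ δ * |r| ^ p →
        ∃ x : (pmSum T B hle).domain, (x : E) ≠ 0 ∧ pmSum T B hle x = z • (x : E)) ∧
      ∀ s : Finset E, (∀ x ∈ s, ∃ a ∈ pmSpectrum (pmSum T B hle),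
        |a.re - r| ≤ δ * |r| ^ p ∧ ∃ n, x ∈ genEigenspace (pmSum T B hle) a n) →
        LinearIndependent ℂ (fun v : s => (v : E)) → s.card ≤ C * m := by
  have hb0 : 0 < b := hb.1
  obtain ⟨δ', hδδ', hδ'b⟩ := exists_between (show δ < b₁ - b by linarith)
  have hδ' : 0 < δ' := hδ.trans hδδ'
  have hd : 0 < b₁ - δ' := by linarith
  have hb₁ : 0 < b₁ := by linarith
  obtain ⟨R, q, hR, hq, hB⟩ := exists_forall_relSmallAt hp hb (show b < b₁ - δ' by linarith)
    (show 0 ≤ δ' + 2 * b₁ by linarith)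
  obtain ⟨κ, hκ, hΩ⟩ := exists_hasBlaschkeBound_strip hδ' hδδ' (b₁ - δ')
  have hq' : 0 < 1 - q := sub_pos.mpr hq
  set X : ℝ := 1 + 2 * b₁ * ((1 - q) * (b₁ - δ'))⁻¹ with hX
  have hX1 : 1 ≤ X := le_add_of_nonneg_right (by positivity)
  obtain ⟨C, hC⟩ := exists_pow_lt_of_lt_one
    (show 0 < ((m.factorial * X ^ m) ^ 2)⁻¹ by positivity) hκ.2
  rw [← mul_one (_ ^ 2)⁻¹, lt_inv_mul_iff₀ (by positivity)] at hC
  refine ⟨R, C, fun r F hr hF hfd hm => ?_⟩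
  have hρ : 0 < |r| ^ p := Real.rpow_pos_of_pos (hR.trans_le hr) p
  have hsum : b₁ * |r| ^ p = δ' * |r| ^ p + (b₁ - δ') * |r| ^ p := by ring
  have hBr := hB |r| hr
  rw [show |r| + (δ' + 2 * b₁) * |r| ^ p =
    |r| + δ' * |r| ^ p + 2 * (δ' * |r| ^ p + (b₁ - δ') * |r| ^ p) by ring] at hBr
  rw [hsum] at hF
  obtain ⟨hU, hUm⟩ := finrank_finset_sup_le F _ hfd
  change FiniteDimensional ℂ (eigenspaceSup T F) at hU
  replace hUm : Module.finrank ℂ (eigenspaceSup T F) ≤ m := hUm.trans hm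
  have hδρ : δ * |r| ^ p < δ' * |r| ^ p := mul_lt_mul_of_pos_right hδδ' hρ
  refine ⟨fun z hz hzr => hBr.exists_eigenvector_of_mem_pmSpectrum hT hnr hF (by positivity)
    (by positivity) hq hz (hzr.trans hδρ.le), fun s hs hli => ?_⟩
  refine (hBr.card_le_mul_finrank hT hnr hF (by positivity) hq (by positivity) hδρ (hΩ r _ hρ)
    (Set.Ico_subset_Icc_self hκ) (X := X) ?_ (C := C) ?_ hs hli).trans
    (Nat.mul_le_mul_left C hUm)
  · rw [← hsum, hX]
    field_simp
    rfl
  · exact lt_of_le_of_lt (by have := hκ.1; gcongr) hC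

end SpectralGap

section Bands

variable {α : ℤ → ℝ} {p b₁ : ℝ}

theorem lt_of_disjoint_Icc (hmono : Monotone α)
    (hdisj : ∀ k l : ℤ, k ≠ l →
      Disjoint (Set.Icc (α (2 * k - 1)) (α (2 * k))) (Set.Icc (α (2 * l - 1)) (α (2 * l))))
    (k : ℤ) : α (2 * k) < α (2 * k + 1) := by
  have hleft : α (2 * k) ∈ Set.Icc (α (2 * k - 1)) (α (2 * k)) := ⟨hmono (by lia), le_rfl⟩
  have hright : α (2 * k) ≤ α (2 * (k + 1)) := hmono (by lia)
  by_contra! hcon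
  refine Set.disjoint_left.mp (hdisj k (k + 1) (by lia)) hleft ⟨?_, hright⟩
  rwa [show 2 * (k + 1) - 1 = 2 * k + 1 by ring]

theorem mul_rpow_abs_midpoint_le {a c : ℝ}
    (h : (2 : ℝ) ^ (1 - p) * b₁ * |c + a| ^ p ≤ c - a) :
    b₁ * |(a + c) / 2| ^ p ≤ (c - a) / 2 := by
  rw [le_div_iff₀ two_pos]
  calc b₁ * |(a + c) / 2| ^ p * 2 = (2 : ℝ) ^ (1 - p) * b₁ * |c + a| ^ p := by
        rw [abs_div, abs_two, Real.div_rpow (abs_nonneg _) two_pos.le, Real.rpow_sub two_pos,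
          Real.rpow_one, add_comm a c]
        ring
    _ ≤ c - a := h

theorem exists_forall_le_abs_midpoint (hp : p ∈ Set.Ico (0 : ℝ) 1) (hb₁ : 0 < b₁)
    (hmono : Monotone α) (hlt : ∀ k : ℤ, α (2 * k) < α (2 * k + 1))
    (hhalf : ∀ k : ℤ, b₁ * |(α (2 * k) + α (2 * k + 1)) / 2| ^ p ≤ (α (2 * k + 1) - α (2 * k)) / 2)
    (R : ℝ) : ∃ N : ℕ, ∀ k : ℤ, N ≤ |k| → R ≤ |(α (2 * k) + α (2 * k + 1)) / 2| := by
  refine exists_forall_le_abs_of_add_le (x := fun k : ℤ => (α (2 * k) + α (2 * k + 1)) / 2)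
    (Real.rpow_pos_of_pos hb₁ (1 - p)⁻¹) (fun k => ?_) R
  have hnext : α (2 * k + 1) ≤ α (2 * (k + 1)) := hmono (by lia)
  rw [← le_sub_iff_add_le']
  refine rpow_inv_one_sub_le_sub hp hb₁.le ?_ ?_
  · linarith [hlt k, hlt (k + 1)]
  · linarith [hhalf k, hhalf (k + 1)]

variable {E : Type*} [NormedAddCommGroup E] [InnerProductSpace ℂ E] {T : E →ₗ.[ℂ] E}
variable {ev : ℤ → Finset ℝ}

theorem mem_pmResolventSet_of_im_ne_zero
    (hspec : pmSpectrum T ⊆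
      (⋃ k : ℤ, Complex.ofReal '' Set.Icc (α (2 * k - 1)) (α (2 * k))) ∪
        ⋃ k : ℤ, Complex.ofReal '' (ev k : Set ℝ)) {z : ℂ} (hz : z.im ≠ 0) :
    z ∈ pmResolventSet T := by
  by_contra hcon
  rcases hspec hcon with h | h <;> obtain ⟨k, y, -, rfl⟩ := Set.mem_iUnion.mp h <;>
    exact hz (Complex.ofReal_im y)

theorem ofReal_mem_pmResolventSet_of_mem_Ioo (hmono : Monotone α)
    (hev : ∀ k : ℤ, (ev k : Set ℝ) ⊆ Set.Ioo (α (2 * k)) (α (2 * k + 1)))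
    (hspec : pmSpectrum T ⊆
      (⋃ k : ℤ, Complex.ofReal '' Set.Icc (α (2 * k - 1)) (α (2 * k))) ∪
        ⋃ k : ℤ, Complex.ofReal '' (ev k : Set ℝ)) {k : ℤ} {ν : ℝ}
    (hν : ν ∈ Set.Ioo (α (2 * k)) (α (2 * k + 1))) (hνk : ν ∉ ev k) :
    (ν : ℂ) ∈ pmResolventSet T := by
  have hlo {l : ℤ} (h : α l < ν) : l < 2 * k + 1 := hmono.reflect_lt (h.trans hν.2)
  have hhi {l : ℤ} (h : ν < α l) : 2 * k < l := hmono.reflect_lt (hν.1.trans h)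
  by_contra hcon
  rcases hspec hcon with h | h
  · obtain ⟨l, y, hy, hyν⟩ := Set.mem_iUnion.mp h
    obtain rfl := Complex.ofReal_injective hyν
    have hkl : 2 * k < 2 * l := hmono.reflect_lt (hν.1.trans_le hy.2)
    have hlk : 2 * l - 1 < 2 * k + 1 := hmono.reflect_lt (hy.1.trans_lt hν.2)
    lia
  · obtain ⟨l, y, hy, hyν⟩ := Set.mem_iUnion.mp h
    obtain rfl := Complex.ofReal_injective hyν
    have hlk := hlo (hev l hy).1
    have hkl := hhi (hev l hy).2
    obtain rfl : l = k := by lia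
    exact hνk hy

theorem isSpectralGap_filter (hmono : Monotone α)
    (hev : ∀ k : ℤ, (ev k : Set ℝ) ⊆ Set.Ioo (α (2 * k)) (α (2 * k + 1)))
    (hspec : pmSpectrum T ⊆
      (⋃ k : ℤ, Complex.ofReal '' Set.Icc (α (2 * k - 1)) (α (2 * k))) ∪
        ⋃ k : ℤ, Complex.ofReal '' (ev k : Set ℝ)) {k : ℤ} {s : ℝ}
    (hs : s ≤ (α (2 * k + 1) - α (2 * k)) / 2) :
    IsSpectralGap T ((α (2 * k) + α (2 * k + 1)) / 2) s
      {ν ∈ ev k | |ν - (α (2 * k) + α (2 * k + 1)) / 2| < s} where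
  abs_sub_lt _ hν := (Finset.mem_filter.mp hν).2
  mem_pmResolventSet ν hν hνF := by
    obtain ⟨hlo, hhi⟩ := abs_lt.mp hν
    exact ofReal_mem_pmResolventSet_of_mem_Ioo hmono hev hspec ⟨by linarith, by linarith⟩
      fun hνk => hνF (Finset.mem_filter.mpr ⟨hνk, hν⟩)

end Bands

/-- Let `T` be self-adjoint with essential spectrum in the pairwise disjoint
intervals `Δ_k = [α_{2k−1}, α_{2k}]`, `k ∈ ℤ`, whose gaps `Λ_k = (α_{2k}, α_{2k+1})` satisfy
`α_{2k+1} − α_{2k} ≥ 2^{1−p} b₁ |α_{2k+1} + α_{2k}|^p`; outside the `Δ_k` the operator `T` has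
only discrete spectrum, each gap containing at most `m` eigenvalues of `T` counted with
multiplicity.  Let `B` be `p`-subordinate to `T` with subordination bound `b' < b₁`, and
`A = T + B`.  Then: (i) for every `h > b'` the spectrum of `A` outside a large disk lies in
the double parabola `P_{p,h}`; (ii) for every `δ ∈ (0, b₁ − b')` there are `N ∈ ℕ` and `C`
(independent of `k`) such that for `|k| ≥ N` the strip `Ω_k = {|Re λ − r_k| ≤ δ|r_k|^p}`,
`r_k = (α_{2k} + α_{2k+1})/2`, contains no spectrum of `A` except eigenvalues of total
algebraic multiplicity at most `C·m` (any linearly independent family of generalized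
eigenvectors for eigenvalues in `Ω_k` has at most `C·m` elements). -/
theorem stmt2 (T B : H →ₗ.[ℂ] H) (p b₁ b' : ℝ) (hp : p ∈ Set.Ico (0 : ℝ) 1) (hb₁ : 0 < b₁)
    (hsa : IsSelfAdjoint T) (α : ℤ → ℝ) (hmono : Monotone α)
    (hdisj : ∀ k l : ℤ, k ≠ l →
      Disjoint (Set.Icc (α (2 * k - 1)) (α (2 * k))) (Set.Icc (α (2 * l - 1)) (α (2 * l))))
    (hgap : ∀ k : ℤ,
      (2 : ℝ) ^ (1 - p) * b₁ * |α (2 * k + 1) + α (2 * k)| ^ p ≤ α (2 * k + 1) - α (2 * k))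
    (m : ℕ) (ev : ℤ → Finset ℝ)
    (hev : ∀ k : ℤ, (ev k : Set ℝ) ⊆ Set.Ioo (α (2 * k)) (α (2 * k + 1)))
    (hspec : pmSpectrum T ⊆
      (⋃ k : ℤ, Complex.ofReal '' Set.Icc (α (2 * k - 1)) (α (2 * k))) ∪
        ⋃ k : ℤ, Complex.ofReal '' (ev k : Set ℝ))
    (hfd : ∀ k : ℤ, ∀ ν ∈ ev k, FiniteDimensional ℂ (pmEigenspace T (ν : ℂ)))
    (hm : ∀ k : ℤ, (∑ ν ∈ ev k, Module.finrank ℂ (pmEigenspace T (ν : ℂ))) ≤ m)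
    (hle : T.domain ≤ B.domain) (hb' : IsGLB (SubordSet T B hle p) b') (hbb : b' < b₁) :
    (∀ h : ℝ, b' < h → ∃ R₀ : ℝ, 0 < R₀ ∧
      ∀ z ∈ pmSpectrum (pmSum T B hle), R₀ ≤ ‖z‖ → |z.im| < h * |z.re| ^ p) ∧
    ∀ δ : ℝ, 0 < δ → δ < b₁ - b' →
      ∃ (N : ℕ) (C : ℕ), 0 < C ∧
        ∀ k : ℤ, (N : ℤ) ≤ |k| →
          (∀ z ∈ pmSpectrum (pmSum T B hle),
            |z.re - (α (2 * k) + α (2 * k + 1)) / 2| ≤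
                δ * |(α (2 * k) + α (2 * k + 1)) / 2| ^ p →
              ∃ x : H, x ≠ 0 ∧ ∃ hx : x ∈ (pmSum T B hle).domain,
                (pmSum T B hle) ⟨x, hx⟩ = z • x) ∧
          ∀ s : Finset H,
            (↑s ⊆ ⋃ z ∈ {z ∈ pmSpectrum (pmSum T B hle) |
                |z.re - (α (2 * k) + α (2 * k + 1)) / 2| ≤
                  δ * |(α (2 * k) + α (2 * k + 1)) / 2| ^ p},
              ⋃ n : ℕ, pmGenEig (pmSum T B hle) z n) →
            LinearIndependent ℂ (fun v : s => (v : H)) → s.card ≤ C * m := by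
  have hT : T.IsFormalAdjoint T := by
    simpa only [LinearPMap.isSelfAdjoint_def.mp hsa] using
      LinearPMap.adjoint_isFormalAdjoint hsa.dense_domain
  have hnr (z : ℂ) (hz : z.im ≠ 0) : z ∈ pmResolventSet T :=
    mem_pmResolventSet_of_im_ne_zero hspec hz
  refine ⟨fun h hh => ?_, fun δ hδ hδb => ?_⟩
  · obtain ⟨b, hb, hbh⟩ := (isGLB_lt_iff hb').mp hh
    exact exists_forall_pmSpectrum_pmSum_abs_im_lt hT hnr hp hb hbh
  obtain ⟨b, hb, hbδ⟩ := (isGLB_lt_iff hb').mp (lt_sub_comm.mp hδb)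
  obtain ⟨R, C, hRC⟩ := exists_forall_card_le_of_isSpectralGap hT hnr hp hb hδ hbδ m
  have hhalf (k : ℤ) := mul_rpow_abs_midpoint_le (hgap k)
  obtain ⟨N, hN⟩ := exists_forall_le_abs_midpoint hp hb₁ hmono (lt_of_disjoint_Icc hmono hdisj)
    hhalf R
  refine ⟨N, C + 1, C.succ_pos, fun k hk => ?_⟩
  obtain ⟨heig, hcard⟩ := hRC _ _ (hN k hk) (isSpectralGap_filter hmono hev hspec (hhalf k))
    (fun ν hν => hfd k ν (Finset.mem_of_mem_filter ν hν))
    ((Finset.sum_le_sum_of_subset (Finset.filter_subset _ _)).trans (hm k))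
  refine ⟨fun z hz hzr => ?_, fun s hs hli => ?_⟩
  · obtain ⟨x, hx0, hx⟩ := heig z hz hzr
    exact ⟨x, hx0, x.2, hx⟩
  · refine (hcard s (fun v hv => ?_) hli).trans (Nat.mul_le_mul_right m C.le_succ)
    simpa only [Set.mem_iUnion, Set.mem_ofPred_eq, exists_prop, and_assoc,
      mem_genEigenspace_iff_mem_pmGenEig] using hs hv
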